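/- arXiv:0806.4498 — 6 statements merged into one kernel-verified Lean document; each statement's English description precedes it below -/
import Mathlib

section
/- Under Assumption 1 or Assumption 2, the minimax a priori error σ̂(ℓ) is finite if and only if ℓ ∈ R(L*) + R(H*), i.e. if and only if there exist z in the domain of L* and u ∈ 𝓨 with ℓ = L*z + H*u. -/
/-!
Cauchy–Schwarz for the form `⟪Q x, y⟫` gives `⟪z, f⟫² ≤ ⟪z, Q⁻¹ z⟫ ⟪Q f, f⟫`. Hence if
`ℓ = L* z + H* u`, the estimate `(u, y)` has error `⟪z, L φ⟫ - ⟪u, η⟫`, whose second moment is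
bounded over the ellipsoid and over all admissible noises.

Conversely, testing a finite `σ(ℓ, u, c)` on the zero noise shows that the linear functional
`φ ↦ ⟪ℓ - H* u, φ⟫` is bounded on `{φ | ⟪Q1 (L φ), L φ⟫ ≤ 1}`; by homogeneity
`|⟪ℓ - H* u, φ⟫| ≤ C ‖L φ‖` on the whole domain (`abs_le_of_bounded_on_ellipsoid`). So it factors
through a bounded functional on `R(L)`, which Hahn–Banach and Riesz represent by some `z`
(`exists_inner_eq_of_bound`), and then `ℓ - H* u = L* z`.
-/

/-!
Minimax a priori state estimation (S. Zhuk).  Setting: 𝓗, 𝓕, 𝓨 real Hilbert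
spaces, `L` a closed densely defined linear operator from 𝓗 to 𝓕 (modelled as a
`LinearPMap`), `H : 𝓗 →L[ℝ] 𝓨` bounded.  The unknown input satisfies
`(Q1 (L φ), L φ) ≤ 1`, the noise `η` is a zero-mean random vector (modelled by
its distribution, a Borel probability measure on 𝓨) with `E (Q2 η, η) ≤ 1`.

**Theorem 1 (finiteness part).** Under Assumption 1 or Assumption 2 the minimax
a priori error is finite iff `ℓ ∈ R(L*) + R(H*)`.
-/

open MeasureTheory
open scoped ENNReal RealInnerProductSpace

/-- A noise distribution is admissible if it is a zero-mean probability measure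
with `E (Q2 η, η) ≤ 1`. -/
def AdmissibleNoise {𝓨 : Type*} [NormedAddCommGroup 𝓨] [InnerProductSpace ℝ 𝓨]
    [MeasurableSpace 𝓨] (Q2 : 𝓨 →L[ℝ] 𝓨) (μ : Measure 𝓨) : Prop :=
  IsProbabilityMeasure μ ∧ Integrable id μ ∧ (∫ η, η ∂μ) = 0 ∧
    (∫⁻ η, ENNReal.ofReal ⟪Q2 η, η⟫ ∂μ) ≤ 1

/-- The worst-case mean-squared error `σ(ℓ, u, c)` of the affine estimate
`(u, y) + c` of `(ℓ, φ)` from the observation `y = H φ + η`. -/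
noncomputable def worstErr {𝓗 𝓕 𝓨 : Type*}
    [NormedAddCommGroup 𝓗] [InnerProductSpace ℝ 𝓗]
    [NormedAddCommGroup 𝓕] [InnerProductSpace ℝ 𝓕]
    [NormedAddCommGroup 𝓨] [InnerProductSpace ℝ 𝓨] [MeasurableSpace 𝓨]
    (L : 𝓗 →ₗ.[ℝ] 𝓕) (H : 𝓗 →L[ℝ] 𝓨) (Q1 : 𝓕 →L[ℝ] 𝓕) (Q2 : 𝓨 →L[ℝ] 𝓨)
    (ℓ : 𝓗) (u : 𝓨) (c : ℝ) : ℝ≥0∞ :=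
  ⨆ (φ : L.domain) (_ : ⟪Q1 (L φ), L φ⟫ ≤ 1) (μ : Measure 𝓨)
      (_ : AdmissibleNoise Q2 μ),
    ∫⁻ η, ENNReal.ofReal ((⟪ℓ, (φ : 𝓗)⟫ - ⟪u, H φ + η⟫ - c) ^ 2) ∂μ

/-- The (squared) minimax a priori error `σ̂(ℓ)²  = inf_{u,c} σ(ℓ, u, c)`. -/
noncomputable def minimaxErr {𝓗 𝓕 𝓨 : Type*}
    [NormedAddCommGroup 𝓗] [InnerProductSpace ℝ 𝓗]
    [NormedAddCommGroup 𝓕] [InnerProductSpace ℝ 𝓕]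
    [NormedAddCommGroup 𝓨] [InnerProductSpace ℝ 𝓨] [MeasurableSpace 𝓨]
    (L : 𝓗 →ₗ.[ℝ] 𝓕) (H : 𝓗 →L[ℝ] 𝓨) (Q1 : 𝓕 →L[ℝ] 𝓕) (Q2 : 𝓨 →L[ℝ] 𝓨)
    (ℓ : 𝓗) : ℝ≥0∞ :=
  ⨅ (u : 𝓨) (c : ℝ), worstErr L H Q1 Q2 ℓ u c

/-- Generalised Cauchy–Schwarz inequality for the form of a positive definite invertible operator,
with one argument passed through the inverse. -/
lemma inner_sq_le_of_pos {E : Type*} [NormedAddCommGroup E] [InnerProductSpace ℝ E]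
    [CompleteSpace E] (Q : E ≃L[ℝ] E) (hsa : IsSelfAdjoint (Q : E →L[ℝ] E))
    (hpos : ∀ f : E, f ≠ 0 → 0 < ⟪Q f, f⟫) (z f : E) :
    ⟪z, f⟫ ^ 2 ≤ ⟪z, Q.symm z⟫ * ⟪Q f, f⟫ := by
  have hnn : ∀ x : E, 0 ≤ ⟪Q x, x⟫ := fun x => by
    rcases eq_or_ne x 0 with rfl | hx
    · simp
    · exact (hpos x hx).le
  have hsymm : ∀ x y : E, ⟪Q x, y⟫ = ⟪x, Q y⟫ := fun x y => hsa.isSymmetric x y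
  set w := Q.symm z with hw
  have hz : z = Q w := by simp [hw]
  have key : ∀ t : ℝ, 0 ≤ ⟪Q f, f⟫ * (t * t) + (2 * ⟪Q w, f⟫) * t + ⟪Q w, w⟫ := fun t => by
    have h := hnn (w + t • f)
    have h2 : ⟪Q f, w⟫ = ⟪Q w, f⟫ := by rw [hsymm, real_inner_comm]
    simp only [map_add, map_smul, inner_add_left, inner_add_right, real_inner_smul_left,
      real_inner_smul_right, h2] at h
    linarith
  have hd := discrim_le_zero key
  rw [hz]
  unfold discrim at hd
  nlinarith

/-- A functional `f` dominated by `‖T ·‖` factors through the range of `T` and is represented by a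
vector of the target space. -/
lemma exists_inner_eq_of_bound {V F : Type*} [AddCommGroup V] [Module ℝ V]
    [NormedAddCommGroup F] [InnerProductSpace ℝ F] [CompleteSpace F]
    (T : V →ₗ[ℝ] F) (f : V →ₗ[ℝ] ℝ) (C : ℝ) (hf : ∀ x, |f x| ≤ C * ‖T x‖) :
    ∃ z : F, ∀ x, f x = ⟪z, T x⟫ := by
  obtain ⟨s, hs⟩ := T.rangeRestrict.exists_rightInverse_of_surjective T.range_rangeRestrict
  have hTs : ∀ y : LinearMap.range T, T (s y) = y := fun y =>
    congrArg Subtype.val (LinearMap.congr_fun hs y)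
  let g : StrongDual ℝ (LinearMap.range T) := (f ∘ₗ s).mkContinuous C fun y => by
    simpa [hTs] using hf (s y)
  obtain ⟨G, hG, -⟩ := exists_extension_norm_eq (LinearMap.range T) g
  refine ⟨(InnerProductSpace.toDual ℝ F).symm G, fun x => ?_⟩
  rw [InnerProductSpace.toDual_symm_apply]
  have h1 : G (T x) = f (s (T.rangeRestrict x)) := hG (T.rangeRestrict x)
  -- `x` and its chosen representative differ by an element of `ker T`, where `f` vanishes
  have h2 := hf (x - s (T.rangeRestrict x))
  rw [map_sub T, hTs, show ((T.rangeRestrict x : LinearMap.range T) : F) = T x from rfl] at h2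
  simp only [sub_self, norm_zero, mul_zero, abs_nonpos_iff,
    map_sub] at h2
  rw [h1]
  linarith

/-- Homogeneity: boundedness of `f - c` on an ellipsoid in the variable `T x` gives a bound by
`‖T x‖` everywhere. -/
lemma abs_le_of_bounded_on_ellipsoid {V F : Type*} [AddCommGroup V] [Module ℝ V]
    [NormedAddCommGroup F] [InnerProductSpace ℝ F]
    (T : V →ₗ[ℝ] F) (f : V →ₗ[ℝ] ℝ) (Q : F →L[ℝ] F) (c m : ℝ)
    (h : ∀ x, ⟪Q (T x), T x⟫ ≤ 1 → |f x - c| ≤ m) :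
    ∃ C : ℝ, ∀ x, |f x| ≤ C * ‖T x‖ := by
  set N : ℝ := ‖Q‖ + 1 with hN
  set K : ℝ := m + |c| with hK
  have hN1 : 1 ≤ N := by rw [hN]; linarith [norm_nonneg Q]
  have hK0 : 0 ≤ K := by
    have := h 0 (by simp)
    linarith [abs_nonneg (f 0 - c), abs_nonneg c]
  refine ⟨K * N, fun x => ?_⟩
  have main : ∀ ε > 0, |f x| ≤ K * N * (‖T x‖ + ε) := fun ε hε => by
    -- `D⁻¹ • x` lies in the ellipsoid; `ε` covers the case `T x = 0`
    set D : ℝ := N * (‖T x‖ + ε) with hD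
    have hDpos : 0 < D := by positivity
    have hQ : ⟪Q (T x), T x⟫ ≤ D ^ 2 := by
      have h1 : ⟪Q (T x), T x⟫ ≤ ‖Q‖ * ‖T x‖ * ‖T x‖ :=
        (real_inner_le_norm _ _).trans
          (mul_le_mul_of_nonneg_right (Q.le_opNorm _) (norm_nonneg _))
      have h2 : ‖Q‖ * ‖T x‖ * ‖T x‖ ≤ N * ‖T x‖ ^ 2 := by
        rw [hN]; nlinarith [sq_nonneg ‖T x‖]
      have h3 : ‖T x‖ ^ 2 ≤ (‖T x‖ + ε) ^ 2 := by gcongr; linarith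
      have h4 : N * (‖T x‖ + ε) ^ 2 ≤ N ^ 2 * (‖T x‖ + ε) ^ 2 := by
        gcongr; nlinarith
      have h5 : N * ‖T x‖ ^ 2 ≤ N * (‖T x‖ + ε) ^ 2 := by gcongr
      rw [hD, mul_pow]; linarith
    have hb := h (D⁻¹ • x) (by
      simp only [map_smul, real_inner_smul_left, real_inner_smul_right]
      rw [← mul_assoc, ← sq, inv_pow, inv_mul_le_iff₀ (by positivity)]
      linarith)
    have hb2 : |f (D⁻¹ • x)| ≤ K := by
      have := abs_add_le (f (D⁻¹ • x) - c) c
      rw [sub_add_cancel] at this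
      linarith
    rw [map_smul, smul_eq_mul, abs_mul, abs_of_pos (inv_pos.2 hDpos),
      inv_mul_le_iff₀ hDpos] at hb2
    rw [hD] at hb2
    linarith
  have hlim : Filter.Tendsto (fun ε : ℝ => K * N * (‖T x‖ + ε)) (nhdsWithin 0 (Set.Ioi 0))
      (nhds (K * N * (‖T x‖ + 0))) :=
    ((continuous_const.mul (continuous_const.add continuous_id)).tendsto 0).mono_left
      nhdsWithin_le_nhds
  rw [add_zero] at hlim
  exact ge_of_tendsto hlim (Filter.eventually_of_mem self_mem_nhdsWithin main)

/-- **Theorem 1 (finiteness).** Under Assumption 1 (`R(L)` and `H(N(L))` closed)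
or Assumption 2 (`{(Lx, Hx) : x ∈ D(L)}` closed), the minimax a priori error
`σ̂(ℓ)` is finite iff `ℓ ∈ R(L*) + R(H*)`. -/
theorem minimax_apriori_error_finite_iff {𝓗 𝓕 𝓨 : Type*}
    [NormedAddCommGroup 𝓗] [InnerProductSpace ℝ 𝓗] [CompleteSpace 𝓗]
    [NormedAddCommGroup 𝓕] [InnerProductSpace ℝ 𝓕] [CompleteSpace 𝓕]
    [NormedAddCommGroup 𝓨] [InnerProductSpace ℝ 𝓨] [CompleteSpace 𝓨]
    [MeasurableSpace 𝓨] [BorelSpace 𝓨]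
    -- `L` closed densely defined
    (L : 𝓗 →ₗ.[ℝ] 𝓕) (hLdense : Dense (L.domain : Set 𝓗))
    (hLclosed : IsClosed (L.graph : Set (𝓗 × 𝓕)))
    (H : 𝓗 →L[ℝ] 𝓨)
    -- `Q1`, `Q2` bounded self-adjoint positive definite with bounded inverses
    (Q1 : 𝓕 ≃L[ℝ] 𝓕) (Q2 : 𝓨 ≃L[ℝ] 𝓨)
    (hQ1sa : IsSelfAdjoint (Q1 : 𝓕 →L[ℝ] 𝓕))
    (hQ2sa : IsSelfAdjoint (Q2 : 𝓨 →L[ℝ] 𝓨))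
    (hQ1pos : ∀ f : 𝓕, f ≠ 0 → 0 < ⟪Q1 f, f⟫)
    (hQ2pos : ∀ y : 𝓨, y ≠ 0 → 0 < ⟪Q2 y, y⟫)
    -- Assumption 1 or Assumption 2
    (hassumption :
      (IsClosed {f : 𝓕 | ∃ x : L.domain, L x = f} ∧
        IsClosed (H '' {x : 𝓗 | ∃ hx : x ∈ L.domain, L ⟨x, hx⟩ = 0})) ∨
      IsClosed {p : 𝓕 × 𝓨 | ∃ x : L.domain, p = (L x, H (x : 𝓗))})
    (ℓ : 𝓗) :
    minimaxErr L H (Q1 : 𝓕 →L[ℝ] 𝓕) (Q2 : 𝓨 →L[ℝ] 𝓨) ℓ < ⊤ ↔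
      ∃ z : L.adjoint.domain, ∃ u : 𝓨,
        ℓ = L.adjoint z + (ContinuousLinearMap.adjoint H) u := by
  constructor
  · intro hfin
    simp only [minimaxErr, iInf_lt_iff] at hfin
    obtain ⟨u, c, hfin⟩ := hfin
    set M := worstErr L H (Q1 : 𝓕 →L[ℝ] 𝓕) (Q2 : 𝓨 →L[ℝ] 𝓨) ℓ u c with hM
    have hadm : AdmissibleNoise (Q2 : 𝓨 →L[ℝ] 𝓨) (Measure.dirac (0 : 𝓨)) := by
      refine ⟨inferInstance, integrable_dirac (by simp), ?_, ?_⟩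
      · rw [integral_dirac]
      · rw [lintegral_dirac]; simp
    let f : L.domain →ₗ[ℝ] ℝ :=
      (innerₛₗ ℝ (ℓ - ContinuousLinearMap.adjoint H u)) ∘ₗ L.domain.subtype
    have hf : ∀ φ : L.domain, f φ = ⟪ℓ, (φ : 𝓗)⟫ - ⟪u, H φ⟫ := fun φ => by
      simp [f, ContinuousLinearMap.adjoint_inner_left]
    have hbd : ∀ φ : L.domain, ⟪(Q1 : 𝓕 →L[ℝ] 𝓕) (L.toFun φ), L.toFun φ⟫ ≤ 1 →
        |f φ - c| ≤ Real.sqrt M.toReal := fun φ hφ => by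
      have h1 : ∫⁻ η, ENNReal.ofReal ((⟪ℓ, (φ : 𝓗)⟫ - ⟪u, H φ + η⟫ - c) ^ 2)
          ∂(Measure.dirac (0 : 𝓨)) ≤ M :=
        le_iSup_of_le φ <| le_iSup_of_le hφ <| le_iSup_of_le _ <| le_iSup_of_le hadm le_rfl
      rw [lintegral_dirac, add_zero, ENNReal.ofReal_le_iff_le_toReal hfin.ne, ← hf] at h1
      exact Real.abs_le_sqrt h1
    obtain ⟨C, hC⟩ := abs_le_of_bounded_on_ellipsoid L.toFun f _ c _ hbd
    obtain ⟨z, hz⟩ := exists_inner_eq_of_bound L.toFun f C hC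
    have hz' : ∀ x : L.domain, ⟪ℓ - ContinuousLinearMap.adjoint H u, (x : 𝓗)⟫ = ⟪z, L x⟫ := hz
    refine ⟨⟨z, LinearPMap.mem_adjoint_domain_of_exists z ⟨_, hz'⟩⟩, u, ?_⟩
    rw [LinearPMap.adjoint_apply_eq hLdense _ hz', sub_add_cancel]
  · rintro ⟨z, u, rfl⟩
    set A : ℝ := ⟪(z : 𝓕), Q1.symm z⟫ with hA
    set B : ℝ := ⟪u, Q2.symm u⟫ with hB
    have hB0 : 0 ≤ B := by
      rcases eq_or_ne (Q2.symm u) 0 with h | h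
      · simp [hB, h]
      · simpa using (hQ2pos _ h).le
    have hA0 : 0 ≤ A := by
      rcases eq_or_ne (Q1.symm (z : 𝓕)) 0 with h | h
      · simp [hA, h]
      · simpa using (hQ1pos _ h).le
    refine lt_of_le_of_lt (iInf₂_le u 0) (lt_of_le_of_lt ?_
      (ENNReal.add_lt_top.2 ⟨ENNReal.ofReal_lt_top (r := 2 * A),
        ENNReal.ofReal_lt_top (r := 2 * B)⟩))
    refine iSup_le fun φ => iSup_le fun hφ => iSup_le fun μ => iSup_le fun hμ => ?_
    obtain ⟨hprob, -, -, hμ2⟩ := hμ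
    have hpt : ∀ η : 𝓨, ENNReal.ofReal ((⟪L.adjoint z + ContinuousLinearMap.adjoint H u, (φ : 𝓗)⟫
        - ⟪u, H φ + η⟫ - 0) ^ 2) ≤
        ENNReal.ofReal (2 * A) + ENNReal.ofReal (2 * B) * ENNReal.ofReal ⟪Q2 η, η⟫ := fun η => by
      have h1 : ⟪L.adjoint z + ContinuousLinearMap.adjoint H u, (φ : 𝓗)⟫ - ⟪u, H φ + η⟫ - 0
          = ⟪(z : 𝓕), L φ⟫ - ⟪u, η⟫ := by
        rw [inner_add_left, inner_add_right, ContinuousLinearMap.adjoint_inner_left,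
          LinearPMap.adjoint_isFormalAdjoint hLdense z φ]
        ring
      have hη0 : 0 ≤ ⟪Q2 η, η⟫ := by
        rcases eq_or_ne η 0 with rfl | h
        · simp
        · exact (hQ2pos _ h).le
      have h2 := inner_sq_le_of_pos Q1 hQ1sa hQ1pos z (L φ)
      have h3 := inner_sq_le_of_pos Q2 hQ2sa hQ2pos u η
      have h4 : A * ⟪Q1 (L φ), L φ⟫ ≤ A := mul_le_of_le_one_right hA0 hφ
      rw [h1, ← ENNReal.ofReal_mul (by positivity),
        ← ENNReal.ofReal_add (by positivity) (by positivity)]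
      apply ENNReal.ofReal_le_ofReal
      nlinarith [sq_nonneg (⟪(z : 𝓕), L φ⟫ + ⟪u, η⟫)]
    refine (lintegral_mono hpt).trans ?_
    rw [lintegral_add_left measurable_const, lintegral_const, measure_univ, mul_one,
      lintegral_const_mul' _ _ ENNReal.ofReal_ne_top]
    gcongr
    exact mul_le_of_le_one_right' hμ2
end

section
/- Suppose ℓ ∈ R(L*) + R(H*), G is a convex closed bounded subset of 𝓕 with int G ∩ R(L) ≠ ∅. Then the optimal value of the minimax a priori estimation problem equals the optimal value of the dual optimal control problem: inf over (u, c) of σ_G(ℓ, u, c) equals inf over u ∈ 𝓨 of [ (Q2⁻¹u, u) + inf{ c(G, z)² : z in the domain of L*, L*z = ℓ − H*u } ], where c(G, z) = sup_{f ∈ G} (z, f) is the support function of G. -/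
/-!
For fixed `u` and `c` the error of the estimate at an input `φ` is `b - ⟪u, η⟫` with
`b = ⟪ℓ - H* u, φ⟫ - c`.  Since `η` has mean zero, its mean square is `b² + E ⟪u, η⟫²`, and the
Cauchy-Schwarz inequality for the form `⟪Q2 ·, ·⟫` gives `E ⟪u, η⟫² ≤ ⟪Q2⁻¹ u, u⟫`
(`lintegral_sq_le`); a symmetric two-point noise attains this bound for all `b` simultaneously
(`exists_extremal_noise`).  As `{φ | L φ ∈ G}` is symmetric, the choice `c = 0` is optimal.

It remains to compare `sup {⟪w, φ⟫² | L φ ∈ G}` with `inf {c(G, z)² | L* z = w}` for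
`w = ℓ - H* u`.  One inequality is `⟪w, φ⟫ = ⟪z, L φ⟫ ≤ c(G, z)`.  For the other
(`exists_adjoint_preimage`), let `M` bound `⟪w, φ⟫` on `{φ | L φ ∈ G}`.  Then `L φ ↦ ⟪w, φ⟫` is a
well-defined functional on `R(L)` dominated by `M` times the gauge of `G`.  Because `0` is interior
to `G`, the Hahn-Banach theorem extends it to a bounded functional `⟪z, ·⟫` with the same
domination, whence `L* z = w` and `c(G, z) ≤ M`.
-/

/-!
Minimax a priori estimation: **Theorem 2 (general duality principle)**.
The minimax a priori estimation problem equals the dual optimal control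
problem `inf_u [(Q2⁻¹ u, u) + inf { c(G, z)² : L* z = ℓ − H* u }]`,
where `c(G, z) = sup_{f ∈ G} (z, f)` is the support function of `G`.
-/

open MeasureTheory
open scoped ENNReal RealInnerProductSpace

/-- The worst-case mean-squared error `σ_G(ℓ, u, c)` of the affine estimate
`(u, y) + c` of `(ℓ, φ)` from the observation `y = H φ + η`, where the unknown
input ranges over `L φ ∈ G`. -/
noncomputable def worstErrG {𝓗 𝓕 𝓨 : Type*}
    [NormedAddCommGroup 𝓗] [InnerProductSpace ℝ 𝓗]
    [NormedAddCommGroup 𝓕] [InnerProductSpace ℝ 𝓕]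
    [NormedAddCommGroup 𝓨] [InnerProductSpace ℝ 𝓨] [MeasurableSpace 𝓨]
    (L : 𝓗 →ₗ.[ℝ] 𝓕) (H : 𝓗 →L[ℝ] 𝓨) (G : Set 𝓕) (Q2 : 𝓨 →L[ℝ] 𝓨)
    (ℓ : 𝓗) (u : 𝓨) (c : ℝ) : ℝ≥0∞ :=
  ⨆ (φ : L.domain) (_ : L φ ∈ G) (μ : Measure 𝓨)
      (_ : AdmissibleNoise Q2 μ),
    ∫⁻ η, ENNReal.ofReal ((⟪ℓ, (φ : 𝓗)⟫ - ⟪u, H φ + η⟫ - c) ^ 2) ∂μ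

/-- The support function `c(G, z) = sup_{f ∈ G} (z, f)` of a set `G`. -/
noncomputable def suppFn {𝓕 : Type*} [NormedAddCommGroup 𝓕]
    [InnerProductSpace ℝ 𝓕] (G : Set 𝓕) (z : 𝓕) : ℝ :=
  sSup ((fun f => ⟪z, f⟫) '' G)

/-! ### The noise -/

section Noise

variable {𝓨 : Type*} [NormedAddCommGroup 𝓨] [InnerProductSpace ℝ 𝓨]

theorem quad_nonneg (Q2 : 𝓨 ≃L[ℝ] 𝓨) (hQ2pos : ∀ y : 𝓨, y ≠ 0 → 0 < ⟪Q2 y, y⟫) (y : 𝓨) :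
    0 ≤ ⟪Q2 y, y⟫ := by
  by_cases h : y = 0
  · simp [h]
  · exact (hQ2pos y h).le

theorem quad_symm_nonneg (Q2 : 𝓨 ≃L[ℝ] 𝓨) (hQ2pos : ∀ y : 𝓨, y ≠ 0 → 0 < ⟪Q2 y, y⟫) (u : 𝓨) :
    0 ≤ ⟪Q2.symm u, u⟫ := by
  have h := quad_nonneg Q2 hQ2pos (Q2.symm u)
  rwa [Q2.apply_symm_apply, real_inner_comm] at h

/-- The Cauchy-Schwarz inequality for the form `⟪Q2 ·, ·⟫`, applied to `Q2⁻¹ u` and `y`. -/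
theorem inner_sq_le [CompleteSpace 𝓨] (Q2 : 𝓨 ≃L[ℝ] 𝓨)
    (hQ2sa : IsSelfAdjoint (Q2 : 𝓨 →L[ℝ] 𝓨))
    (hQ2pos : ∀ y : 𝓨, y ≠ 0 → 0 < ⟪Q2 y, y⟫) (u y : 𝓨) :
    ⟪u, y⟫ ^ 2 ≤ ⟪Q2.symm u, u⟫ * ⟪Q2 y, y⟫ := by
  have hs : ⟪Q2 y, Q2.symm u⟫ = ⟪u, y⟫ := by
    have h := hQ2sa.isSymmetric y (Q2.symm u)
    simp only [ContinuousLinearMap.coe_coe, ContinuousLinearEquiv.coe_coe,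
      Q2.apply_symm_apply] at h
    rw [h, real_inner_comm]
  have h : ∀ t : ℝ, 0 ≤ ⟪Q2.symm u, u⟫ * (t * t) + (2 * ⟪u, y⟫) * t + ⟪Q2 y, y⟫ := by
    intro t
    have h := quad_nonneg Q2 hQ2pos (t • Q2.symm u + y)
    simp only [map_add, map_smul, Q2.apply_symm_apply, inner_add_left, inner_add_right,
      real_inner_smul_left, real_inner_smul_right, hs] at h
    rw [real_inner_comm (Q2.symm u) u] at h
    linarith
  have := discrim_le_zero h
  rw [discrim] at this
  linarith

variable [MeasurableSpace 𝓨]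

theorem lintegral_sq_le [CompleteSpace 𝓨] (Q2 : 𝓨 ≃L[ℝ] 𝓨)
    (hQ2sa : IsSelfAdjoint (Q2 : 𝓨 →L[ℝ] 𝓨))
    (hQ2pos : ∀ y : 𝓨, y ≠ 0 → 0 < ⟪Q2 y, y⟫) (u : 𝓨) (b : ℝ) (μ : Measure 𝓨)
    (hμ : AdmissibleNoise (Q2 : 𝓨 →L[ℝ] 𝓨) μ) :
    ∫⁻ η, ENNReal.ofReal ((b - ⟪u, η⟫) ^ 2) ∂μ ≤ ENNReal.ofReal (⟪Q2.symm u, u⟫ + b ^ 2) := by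
  obtain ⟨hP, hint, hmean, hvar⟩ := hμ
  simp only [ContinuousLinearEquiv.coe_coe] at hvar
  have hid : AEStronglyMeasurable (fun η : 𝓨 => η) μ := hint.aestronglyMeasurable
  have hQm : AEStronglyMeasurable (fun η : 𝓨 => ⟪Q2 η, η⟫) μ :=
    (Q2.continuous.comp_aestronglyMeasurable hid).inner hid
  have hQnn : 0 ≤ᵐ[μ] fun η : 𝓨 => ⟪Q2 η, η⟫ := ae_of_all _ (quad_nonneg Q2 hQ2pos)
  have hQint : Integrable (fun η : 𝓨 => ⟪Q2 η, η⟫) μ :=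
    ⟨hQm, (hasFiniteIntegral_iff_ofReal hQnn).2 (hvar.trans_lt ENNReal.one_lt_top)⟩
  have hQle : ∫ η, ⟪Q2 η, η⟫ ∂μ ≤ 1 := by
    rw [integral_eq_lintegral_of_nonneg_ae hQnn hQm]
    exact ENNReal.toReal_mono ENNReal.one_ne_top hvar
  have huint : Integrable (fun η : 𝓨 => ⟪u, η⟫) μ := Integrable.const_inner u hint
  have hu0 : ∫ η, ⟪u, η⟫ ∂μ = 0 := by
    have h : ∫ η, ⟪u, η⟫ ∂μ = ⟪u, ∫ η, η ∂μ⟫ := integral_inner hint u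
    rw [h, hmean, inner_zero_right]
  have hi1 : Integrable (fun η : 𝓨 => b ^ 2 - 2 * b * ⟪u, η⟫) μ :=
    (integrable_const _).sub (huint.const_mul _)
  have hi2 : Integrable (fun η : 𝓨 => ⟪Q2.symm u, u⟫ * ⟪Q2 η, η⟫) μ := hQint.const_mul _
  have hpt : ∀ η : 𝓨, (b - ⟪u, η⟫) ^ 2 ≤
      (b ^ 2 - 2 * b * ⟪u, η⟫) + ⟪Q2.symm u, u⟫ * ⟪Q2 η, η⟫ := by
    intro η
    nlinarith [inner_sq_le Q2 hQ2sa hQ2pos u η]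
  calc ∫⁻ η, ENNReal.ofReal ((b - ⟪u, η⟫) ^ 2) ∂μ
      ≤ ∫⁻ η, ENNReal.ofReal
          ((b ^ 2 - 2 * b * ⟪u, η⟫) + ⟪Q2.symm u, u⟫ * ⟪Q2 η, η⟫) ∂μ :=
        lintegral_mono fun η => ENNReal.ofReal_le_ofReal (hpt η)
    _ = ENNReal.ofReal
          (∫ η, ((b ^ 2 - 2 * b * ⟪u, η⟫) + ⟪Q2.symm u, u⟫ * ⟪Q2 η, η⟫) ∂μ) :=
        (ofReal_integral_eq_lintegral_ofReal (hi1.add hi2)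
          (ae_of_all _ fun η => (sq_nonneg _).trans (hpt η))).symm
    _ ≤ ENNReal.ofReal (⟪Q2.symm u, u⟫ + b ^ 2) := by
        apply ENNReal.ofReal_le_ofReal
        rw [integral_add hi1 hi2, integral_sub (integrable_const _) (huint.const_mul _),
          integral_const_mul, integral_const_mul, hu0]
        simp only [integral_const, probReal_univ, smul_eq_mul]
        nlinarith [mul_le_mul_of_nonneg_left hQle (quad_symm_nonneg Q2 hQ2pos u)]

/-- The law of `±v` with equal probabilities, where `v = Q2⁻¹ u / √⟪Q2⁻¹ u, u⟫`, attains the bound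
of `lintegral_sq_le` for every `b`.  When `u = 0` the junk value `0⁻¹ = 0` gives `v = 0`, which is
the right choice. -/
theorem exists_extremal_noise [CompleteSpace 𝓨] [BorelSpace 𝓨] (Q2 : 𝓨 ≃L[ℝ] 𝓨)
    (hQ2pos : ∀ y : 𝓨, y ≠ 0 → 0 < ⟪Q2 y, y⟫) (u : 𝓨) :
    ∃ μ : Measure 𝓨, AdmissibleNoise (Q2 : 𝓨 →L[ℝ] 𝓨) μ ∧ ∀ b : ℝ,
      ∫⁻ η, ENNReal.ofReal ((b - ⟪u, η⟫) ^ 2) ∂μ = ENNReal.ofReal (⟪Q2.symm u, u⟫ + b ^ 2) := by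
  have hq : 0 ≤ ⟪Q2.symm u, u⟫ := quad_symm_nonneg Q2 hQ2pos u
  set q := ⟪Q2.symm u, u⟫ with hqdef
  set v : 𝓨 := (√q)⁻¹ • Q2.symm u with hv
  have huv : ⟪u, v⟫ = √q := by
    rw [hv, real_inner_smul_right, real_inner_comm, ← hqdef]
    rw [inv_mul_eq_div, Real.div_sqrt]
  have hQv : ⟪Q2 v, v⟫ ≤ 1 := by
    have h : Q2 v = (√q)⁻¹ • u := by rw [hv, map_smul, Q2.apply_symm_apply]
    rw [h, real_inner_smul_left, huv]
    exact inv_mul_le_one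
  have hQv0 : 0 ≤ ⟪Q2 v, v⟫ := quad_nonneg Q2 hQ2pos v
  have half : (2⁻¹ : ℝ≥0∞) = ENNReal.ofReal 2⁻¹ := by
    rw [ENNReal.ofReal_inv_of_pos two_pos]; simp
  refine ⟨(2⁻¹ : ℝ≥0∞) • (Measure.dirac v + Measure.dirac (-v)), ⟨⟨?_⟩, ?_, ?_, ?_⟩, ?_⟩
  · simp [ENNReal.inv_two_add_inv_two]
  · exact ((integrable_dirac (by simp)).add_measure (integrable_dirac (by simp))).smul_measure
      (by simp)
  · rw [integral_smul_measure, integral_add_measure (integrable_dirac (by simp))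
      (integrable_dirac (by simp)), integral_dirac, integral_dirac]
    simp
  · rw [lintegral_smul_measure, lintegral_add_measure, lintegral_dirac, lintegral_dirac]
    simp only [ContinuousLinearEquiv.coe_coe, map_neg, inner_neg_neg, smul_eq_mul]
    rw [half, ← ENNReal.ofReal_add hQv0 hQv0, ← ENNReal.ofReal_mul (by norm_num)]
    exact ENNReal.ofReal_le_one.2 (by linarith)
  · intro b
    rw [lintegral_smul_measure, lintegral_add_measure, lintegral_dirac, lintegral_dirac]
    simp only [inner_neg_right, smul_eq_mul, huv]
    rw [half, ← ENNReal.ofReal_add (sq_nonneg _) (sq_nonneg _),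
      ← ENNReal.ofReal_mul (by norm_num)]
    congr 1
    nlinarith [Real.sq_sqrt hq]

end Noise

/-! ### The deterministic duality -/

section Duality

variable {𝓗 𝓕 : Type*}
  [NormedAddCommGroup 𝓗] [InnerProductSpace ℝ 𝓗] [CompleteSpace 𝓗]
  [NormedAddCommGroup 𝓕] [InnerProductSpace ℝ 𝓕]

theorem mem_nhds_zero_of_symm {G : Set 𝓕} (hGconv : Convex ℝ G) (hGsymm : ∀ f ∈ G, -f ∈ G)
    (hGint : (interior G).Nonempty) : G ∈ nhds (0 : 𝓕) := by
  obtain ⟨f, hf⟩ := hGint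
  have h : (1 / 2 : ℝ) • f + (1 / 2 : ℝ) • (-f) ∈ interior G :=
    hGconv.combo_interior_self_mem_interior hf (hGsymm f (interior_subset hf))
      (by norm_num) (by norm_num) (by norm_num)
  rw [smul_neg, add_neg_cancel] at h
  exact mem_interior_iff_mem_nhds.1 h

theorem exists_adjoint_preimage [CompleteSpace 𝓕] (L : 𝓗 →ₗ.[ℝ] 𝓕)
    (hLdense : Dense (L.domain : Set 𝓗))
    {G : Set 𝓕} (hGconv : Convex ℝ G) (hG0 : G ∈ nhds (0 : 𝓕)) (w : 𝓗) {M : ℝ} (hM : 0 ≤ M)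
    (hb : ∀ φ : L.domain, L φ ∈ G → ⟪w, (φ : 𝓗)⟫ ≤ M) :
    ∃ z : L.adjoint.domain, L.adjoint z = w ∧ ∀ f ∈ G, ⟪(z : 𝓕), f⟫ ≤ M := by
  have habs : Absorbent ℝ G := absorbent_nhds_zero hG0
  have hdom : ∀ φ : L.domain, ⟪w, (φ : 𝓗)⟫ ≤ M * gauge G (L φ) := by
    intro φ
    have key : ∀ r : ℝ, gauge G (L φ) < r → ⟪w, (φ : 𝓗)⟫ ≤ M * r := by
      intro r hr
      obtain ⟨s, hs, hsr, hmem⟩ := exists_lt_of_gauge_lt habs hr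
      rw [Set.mem_smul_set_iff_inv_smul_mem₀ hs.ne', ← LinearPMap.map_smul] at hmem
      have h := hb _ hmem
      rw [Submodule.coe_smul, real_inner_smul_right, inv_mul_le_iff₀ hs] at h
      nlinarith
    have hcont : Filter.Tendsto (fun r : ℝ => M * r) (nhdsWithin (gauge G (L φ))
        (Set.Ioi (gauge G (L φ)))) (nhds (M * gauge G (L φ))) :=
      ((continuous_const.mul continuous_id).tendsto _).mono_left nhdsWithin_le_nhds
    exact ge_of_tendsto hcont (Filter.eventually_of_mem self_mem_nhdsWithin fun r hr => key r hr)
  -- `ω` is the functional `φ ↦ ⟪w, φ⟫` on the domain of `L`; it vanishes on the kernel of `L`.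
  let ω : Module.Dual ℝ L.domain := (innerₛₗ ℝ w).comp L.domain.subtype
  have hker : ω ∈ (LinearMap.ker L.toFun).dualAnnihilator := by
    rw [Submodule.mem_dualAnnihilator]
    intro φ hφ
    have hφ' : L φ = 0 := hφ
    have h1 := hdom φ
    have h2 := hdom (-φ)
    rw [LinearPMap.map_neg, hφ', neg_zero, gauge_zero, mul_zero] at h2
    rw [hφ', gauge_zero, mul_zero] at h1
    rw [Submodule.coe_neg, inner_neg_right] at h2
    exact le_antisymm h1 (neg_nonpos.1 h2)
  rw [← LinearMap.range_dualMap_eq_dualAnnihilator_ker] at hker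
  obtain ⟨g₀, hg₀⟩ := hker
  have hg₀' : ∀ φ : L.domain, g₀ (L φ) = ⟪w, (φ : 𝓗)⟫ := fun φ => LinearMap.congr_fun hg₀ φ
  obtain ⟨g, hgext, hgle⟩ := exists_extension_of_le_sublinear
    ⟨LinearMap.range L.toFun, g₀.domRestrict _⟩ (fun x => M * gauge G x)
    (fun c hc x => by
      rw [gauge_smul_of_nonneg hc.le, smul_eq_mul]; ring)
    (fun x y => by
      rw [← mul_add]; exact mul_le_mul_of_nonneg_left (gauge_add_le hGconv habs x y) hM)
    (by
      rintro ⟨_, φ, rfl⟩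
      exact (hg₀' φ).trans_le (hdom φ))
  have hgL : ∀ φ : L.domain, g (L φ) = ⟪w, (φ : 𝓗)⟫ := fun φ =>
    (hgext ⟨L φ, φ, rfl⟩).trans (hg₀' φ)
  obtain ⟨r, hr, hball⟩ := Metric.mem_nhds_iff.1 hG0
  have hgbd : ∀ x, g x ≤ M / r * ‖x‖ := by
    intro x
    have h : gauge G x ≤ ‖x‖ / r := by
      rw [le_div_iff₀ hr, mul_comm]; exact mul_gauge_le_norm hball
    calc g x ≤ M * gauge G x := hgle x
      _ ≤ M * (‖x‖ / r) := mul_le_mul_of_nonneg_left h hM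
      _ = M / r * ‖x‖ := by ring
  let gc : StrongDual ℝ 𝓕 := g.mkContinuous (M / r) (fun x => by
    rw [Real.norm_eq_abs, abs_le]
    have h := hgbd (-x)
    rw [map_neg, norm_neg] at h
    exact ⟨by linarith, hgbd x⟩)
  have hz : ∀ f, ⟪(InnerProductSpace.toDual ℝ 𝓕).symm gc, f⟫ = g f := fun f =>
    InnerProductSpace.toDual_symm_apply
  have hadj : ∀ φ : L.domain, ⟪w, (φ : 𝓗)⟫ = ⟪(InnerProductSpace.toDual ℝ 𝓕).symm gc, L φ⟫ :=
    fun φ => by rw [hz, hgL]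
  refine ⟨⟨_, L.mem_adjoint_domain_of_exists _ ⟨w, hadj⟩⟩,
    LinearPMap.adjoint_apply_eq hLdense _ hadj, fun f hf => ?_⟩
  rw [hz]
  exact (hgle f).trans (mul_le_of_le_one_right hM (gauge_le_one_of_mem hf))

theorem inner_le_suppFn {G : Set 𝓕} (hGbdd : Bornology.IsBounded G) (z : 𝓕) {f : 𝓕}
    (hf : f ∈ G) : ⟪z, f⟫ ≤ suppFn G z := by
  obtain ⟨C, hC⟩ := hGbdd.exists_norm_le
  refine le_csSup ⟨‖z‖ * C, ?_⟩ ⟨f, hf, rfl⟩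
  rintro _ ⟨x, hx, rfl⟩
  exact (real_inner_le_norm z x).trans (mul_le_mul_of_nonneg_left (hC x hx) (norm_nonneg z))

end Duality

/-- **Theorem 2 (duality).** -/
theorem minimax_duality {𝓗 𝓕 𝓨 : Type*}
    [NormedAddCommGroup 𝓗] [InnerProductSpace ℝ 𝓗] [CompleteSpace 𝓗]
    [NormedAddCommGroup 𝓕] [InnerProductSpace ℝ 𝓕] [CompleteSpace 𝓕]
    [NormedAddCommGroup 𝓨] [InnerProductSpace ℝ 𝓨] [CompleteSpace 𝓨]
    [MeasurableSpace 𝓨] [BorelSpace 𝓨]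
    -- `L` closed densely defined
    (L : 𝓗 →ₗ.[ℝ] 𝓕) (hLdense : Dense (L.domain : Set 𝓗))
    (hLclosed : IsClosed (L.graph : Set (𝓗 × 𝓕)))
    (H : 𝓗 →L[ℝ] 𝓨)
    -- `Q2` bounded self-adjoint positive definite with bounded inverse
    (Q2 : 𝓨 ≃L[ℝ] 𝓨)
    (hQ2sa : IsSelfAdjoint (Q2 : 𝓨 →L[ℝ] 𝓨))
    (hQ2pos : ∀ y : 𝓨, y ≠ 0 → 0 < ⟪Q2 y, y⟫)
    -- `G` convex closed bounded, symmetric about the origin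
    (G : Set 𝓕) (hGconv : Convex ℝ G) (hGclosed : IsClosed G)
    (hGbdd : Bornology.IsBounded G) (hGsymm : ∀ f ∈ G, -f ∈ G)
    -- `int G ∩ R(L) ≠ ∅`
    (hGint : (interior G ∩ {f : 𝓕 | ∃ x : L.domain, L x = f}).Nonempty)
    (ℓ : 𝓗)
    -- `ℓ ∈ R(L*) + R(H*)`
    (hℓ : ∃ z : L.adjoint.domain, ∃ u : 𝓨,
        ℓ = L.adjoint z + (ContinuousLinearMap.adjoint H) u) :
    (⨅ (u : 𝓨) (c : ℝ), worstErrG L H G (Q2 : 𝓨 →L[ℝ] 𝓨) ℓ u c) =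
      ⨅ (u : 𝓨), (ENNReal.ofReal ⟪Q2.symm u, u⟫ +
        ⨅ (z : L.adjoint.domain)
          (_ : L.adjoint z = ℓ - (ContinuousLinearMap.adjoint H) u),
          ENNReal.ofReal ((suppFn G (z : 𝓕)) ^ 2)) := by
  have hG0 : G ∈ nhds (0 : 𝓕) :=
    mem_nhds_zero_of_symm hGconv hGsymm (hGint.mono Set.inter_subset_left)
  have h0G : (0 : 𝓕) ∈ G := mem_of_mem_nhds hG0
  have herr : ∀ (u : 𝓨) (c : ℝ) (φ : 𝓗) (η : 𝓨), ⟪ℓ, φ⟫ - ⟪u, H φ + η⟫ - c =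
      (⟪ℓ - (ContinuousLinearMap.adjoint H) u, φ⟫ - c) - ⟪u, η⟫ := by
    intro u c φ η
    rw [inner_add_right, inner_sub_left, ContinuousLinearMap.adjoint_inner_left]
    ring
  apply le_antisymm
  · refine iInf_mono fun u => (iInf_le _ (0 : ℝ)).trans ?_
    rw [ENNReal.add_iInf₂]
    refine le_iInf₂ fun z hz => ?_
    refine iSup₂_le fun φ hφ => iSup₂_le fun μ hμ => ?_
    simp only [herr]
    refine (lintegral_sq_le Q2 hQ2sa hQ2pos u _ μ hμ).trans ?_
    rw [← ENNReal.ofReal_add (quad_symm_nonneg Q2 hQ2pos u) (sq_nonneg _)]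
    apply ENNReal.ofReal_le_ofReal
    have hadj : ⟪ℓ - (ContinuousLinearMap.adjoint H) u, (φ : 𝓗)⟫ = ⟪(z : 𝓕), L φ⟫ := by
      rw [← hz]
      exact LinearPMap.adjoint_isFormalAdjoint hLdense z φ
    have h1 := inner_le_suppFn hGbdd (z : 𝓕) hφ
    have h2 := inner_le_suppFn hGbdd (z : 𝓕) (hGsymm _ hφ)
    rw [inner_neg_right] at h2
    rw [hadj, sub_zero]
    exact add_le_add_right (sq_le_sq' (by linarith) h1) _
  · refine le_iInf fun u => le_iInf fun c => (iInf_le _ u).trans ?_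
    by_cases htop : worstErrG L H G (Q2 : 𝓨 →L[ℝ] 𝓨) ℓ u c = ⊤
    · rw [htop]; exact le_top
    set W := (worstErrG L H G (Q2 : 𝓨 →L[ℝ] 𝓨) ℓ u c).toReal with hW
    set w := ℓ - (ContinuousLinearMap.adjoint H) u with hw
    have hq := quad_symm_nonneg Q2 hQ2pos u
    obtain ⟨μ, hμ, hμeq⟩ := exists_extremal_noise Q2 hQ2pos u
    have hlow : ∀ φ : L.domain, L φ ∈ G → ⟪Q2.symm u, u⟫ + (⟪w, (φ : 𝓗)⟫ - c) ^ 2 ≤ W := by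
      intro φ hφ
      rw [hW, ← ENNReal.ofReal_le_iff_le_toReal htop, ← hμeq]
      simp only [hw, ← herr]
      exact le_iSup₂_of_le φ hφ (le_iSup₂_of_le μ hμ le_rfl)
    -- The average of the bounds at `φ` and `-φ` removes the shift `c`.
    have hsq : ∀ φ : L.domain, L φ ∈ G → ⟪w, (φ : 𝓗)⟫ ^ 2 ≤ W - ⟪Q2.symm u, u⟫ := by
      intro φ hφ
      have h1 := hlow φ hφ
      have h2 := hlow (-φ) (by rw [LinearPMap.map_neg]; exact hGsymm _ hφ)
      rw [Submodule.coe_neg, inner_neg_right] at h2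
      nlinarith [sq_nonneg c]
    have hWq : 0 ≤ W - ⟪Q2.symm u, u⟫ :=
      (sq_nonneg _).trans (hsq 0 (by rw [LinearPMap.map_zero]; exact h0G))
    obtain ⟨z, hz, hzG⟩ := exists_adjoint_preimage L hLdense hGconv hG0 w
      (Real.sqrt_nonneg (W - ⟪Q2.symm u, u⟫)) fun φ hφ => Real.le_sqrt_of_sq_le (hsq φ hφ)
    have hs0 : 0 ≤ suppFn G (z : 𝓕) := by
      simpa using inner_le_suppFn hGbdd (z : 𝓕) h0G
    have hs1 : suppFn G (z : 𝓕) ≤ √(W - ⟪Q2.symm u, u⟫) := by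
      refine csSup_le ⟨_, 0, h0G, rfl⟩ ?_
      rintro _ ⟨f, hf, rfl⟩
      exact hzG f hf
    calc ENNReal.ofReal ⟪Q2.symm u, u⟫ + _
        ≤ ENNReal.ofReal ⟪Q2.symm u, u⟫ + ENNReal.ofReal ((suppFn G (z : 𝓕)) ^ 2) :=
          add_le_add_right (iInf₂_le z hz) _
      _ = ENNReal.ofReal (⟪Q2.symm u, u⟫ + (suppFn G (z : 𝓕)) ^ 2) :=
          (ENNReal.ofReal_add hq (sq_nonneg _)).symm
      _ ≤ worstErrG L H G (Q2 : 𝓨 →L[ℝ] 𝓨) ℓ u c := by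
          rw [ENNReal.ofReal_le_iff_le_toReal htop, ← hW]
          nlinarith [Real.sq_sqrt hWq]
end

section
/- Under Assumption 1 or Assumption 2, and assuming the a posteriori set G_y is nonempty, the minimax a posteriori error ρ̂(ℓ) in the direction ℓ is finite if and only if ℓ ∈ R(L*) + R(H*). -/
/-!
Write `T x = (L x, H x)` for `x ∈ D(L)`. The two sides of the equivalence are linked through the
condition that `ℓ` is orthogonal to `N(T) = N(L) ∩ N(H)`, using that `R(T)` is closed.

* Closedness of `R(T)` is the second assumption, and it follows from the first
  (`isClosed_range_pair`): since `R(L)` is closed, the open mapping theorem lifts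
  `L xₙ → L x` to corrections `eₙ → 0` with `L eₙ = L xₙ - L x`, so `xₙ - x - eₙ ∈ N(L)` and
  closedness of `H(N(L))` identifies the limit of `H xₙ`.
* If `ρ̂(ℓ)` is finite, then `ℓ ⊥ N(T)`, because `G_y` is invariant under translations by `N(T)`
  and a linear functional bounded on a line vanishes along it. Then `T x ↦ (ℓ, x)` is a well defined
  functional on the closed space `R(T)`, bounded by the open mapping theorem applied on the graph
  of `L`. A Hahn–Banach extension, represented by `(z, u)`, satisfies `(ℓ, x) = (z, L x) + (u, H x)`
  on `D(L)`, that is `ℓ = L* z + H* u` (`exists_functional_comp_eq`,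
  `mem_range_adjoints_of_orthogonal`).
* If `ℓ = L* z + H* u`, then `(ℓ, φ) = (z, L φ) + (u, H φ)` is bounded on `G_y`, because `Q1` and
  `Q2` are coercive (`exists_sq_norm_le_inner`).
-/

/-!
Minimax a posteriori estimation: **Theorem 3 (finiteness part)**.
Under Assumption 1 or 2, the minimax a posteriori error `ρ̂(ℓ)` in the
direction `ℓ` is finite iff `ℓ ∈ R(L*) + R(H*)`.
-/

open scoped ENNReal RealInnerProductSpace

/-- The a posteriori set
`G_y = {φ ∈ D(L) : (Q1 Lφ, Lφ) + (Q2 (y − Hφ), y − Hφ) ≤ 1}`. -/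
def aPostSet {𝓗 𝓕 𝓨 : Type*}
    [NormedAddCommGroup 𝓗] [InnerProductSpace ℝ 𝓗]
    [NormedAddCommGroup 𝓕] [InnerProductSpace ℝ 𝓕]
    [NormedAddCommGroup 𝓨] [InnerProductSpace ℝ 𝓨]
    (L : 𝓗 →ₗ.[ℝ] 𝓕) (H : 𝓗 →L[ℝ] 𝓨) (Q1 : 𝓕 →L[ℝ] 𝓕) (Q2 : 𝓨 →L[ℝ] 𝓨)
    (y : 𝓨) : Set 𝓗 :=
  {φ | ∃ hφ : φ ∈ L.domain,
    ⟪Q1 (L ⟨φ, hφ⟩), L ⟨φ, hφ⟩⟫ + ⟪Q2 (y - H φ), y - H φ⟫ ≤ 1}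

/-- The worst-case distance `ρ(φ) = sup_{ψ ∈ G_y} |(ℓ, φ) − (ℓ, ψ)|`. -/
noncomputable def rhoErr {𝓗 𝓕 𝓨 : Type*}
    [NormedAddCommGroup 𝓗] [InnerProductSpace ℝ 𝓗]
    [NormedAddCommGroup 𝓕] [InnerProductSpace ℝ 𝓕]
    [NormedAddCommGroup 𝓨] [InnerProductSpace ℝ 𝓨]
    (L : 𝓗 →ₗ.[ℝ] 𝓕) (H : 𝓗 →L[ℝ] 𝓨) (Q1 : 𝓕 →L[ℝ] 𝓕) (Q2 : 𝓨 →L[ℝ] 𝓨)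
    (y : 𝓨) (ℓ φ : 𝓗) : ℝ≥0∞ :=
  ⨆ (ψ : 𝓗) (_ : ψ ∈ aPostSet L H Q1 Q2 y), ENNReal.ofReal |⟪ℓ, φ⟫ - ⟪ℓ, ψ⟫|

/-- The minimax a posteriori error `ρ̂(ℓ) = inf_{φ ∈ G_y} ρ(φ)` in the
direction `ℓ`. -/
noncomputable def rhoHat {𝓗 𝓕 𝓨 : Type*}
    [NormedAddCommGroup 𝓗] [InnerProductSpace ℝ 𝓗]
    [NormedAddCommGroup 𝓕] [InnerProductSpace ℝ 𝓕]
    [NormedAddCommGroup 𝓨] [InnerProductSpace ℝ 𝓨]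
    (L : 𝓗 →ₗ.[ℝ] 𝓕) (H : 𝓗 →L[ℝ] 𝓨) (Q1 : 𝓕 →L[ℝ] 𝓕) (Q2 : 𝓨 →L[ℝ] 𝓨)
    (y : 𝓨) (ℓ : 𝓗) : ℝ≥0∞ :=
  ⨅ (φ : 𝓗) (_ : φ ∈ aPostSet L H Q1 Q2 y), rhoErr L H Q1 Q2 y ℓ φ

/-- Open mapping theorem for an operator with closed range: every element of the range has a
preimage of comparable norm. -/
theorem exists_controlled_preimage {E F : Type*}
    [NormedAddCommGroup E] [NormedSpace ℝ E] [CompleteSpace E]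
    [NormedAddCommGroup F] [NormedSpace ℝ F] [CompleteSpace F]
    (A : E →L[ℝ] F) (hA : IsClosed (Set.range A)) :
    ∃ C > 0, ∀ x : E, ∃ x' : E, A x' = A x ∧ ‖x'‖ ≤ C * ‖A x‖ := by
  have hcl : IsClosed (A.range : Set F) := hA
  have : CompleteSpace A.range := hcl.completeSpace_coe
  obtain ⟨C, hC, h⟩ := ContinuousLinearMap.exists_preimage_norm_le A.rangeRestrict
    (by rintro ⟨_, x, rfl⟩; exact ⟨x, rfl⟩)
  refine ⟨C, hC, fun x => ?_⟩
  obtain ⟨x', hx₁, hn⟩ := h (A.rangeRestrict x)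
  exact ⟨x', congrArg Subtype.val hx₁, hn⟩

/-- The range of the Banach space adjoint of an operator `A` with closed range contains every
functional annihilating the kernel of `A`. -/
theorem exists_functional_comp_eq {E F : Type*}
    [NormedAddCommGroup E] [NormedSpace ℝ E] [CompleteSpace E]
    [NormedAddCommGroup F] [NormedSpace ℝ F] [CompleteSpace F]
    (A : E →L[ℝ] F) (hA : IsClosed (Set.range A))
    (φ : E →L[ℝ] ℝ) (hφ : ∀ x, A x = 0 → φ x = 0) :
    ∃ g : F →L[ℝ] ℝ, ∀ x, g (A x) = φ x := by
  obtain ⟨C, hC, h⟩ := exists_controlled_preimage A hA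
  have hpre : ∀ r : A.range, ∃ x : E, A x = r ∧ ‖x‖ ≤ C * ‖(r : F)‖ := by
    rintro ⟨_, x, rfl⟩
    exact h x
  choose s hs hsn using hpre
  -- `φ` only depends on the image under `A`
  have hwd : ∀ a b, A a = A b → φ a = φ b := fun a b hab => by
    have := hφ (a - b) (by rw [map_sub, hab, sub_self])
    rwa [map_sub, sub_eq_zero] at this
  let f₀ : A.range →ₗ[ℝ] ℝ :=
    { toFun := fun r => φ (s r)
      map_add' := fun a b => by
        rw [← map_add]
        exact hwd _ _ (by rw [map_add, hs, hs, hs]; rfl)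
      map_smul' := fun c a => by
        rw [RingHom.id_apply, ← map_smul]
        exact hwd _ _ (by rw [map_smul, hs, hs]; rfl) }
  let f : A.range →L[ℝ] ℝ := f₀.mkContinuous (‖φ‖ * C) fun r => by
    calc ‖φ (s r)‖ ≤ ‖φ‖ * ‖s r‖ := φ.le_opNorm _
      _ ≤ ‖φ‖ * (C * ‖(r : F)‖) := by gcongr; exact hsn r
      _ = ‖φ‖ * C * ‖r‖ := by rw [mul_assoc]; rfl
  obtain ⟨g, hg, -⟩ := exists_extension_norm_eq A.range f
  refine ⟨g, fun x => ?_⟩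
  have := hg ⟨A x, x, rfl⟩
  exact this.trans (hwd _ _ (hs _))

/-- A positive definite self-adjoint operator with bounded inverse is coercive. -/
theorem exists_sq_norm_le_inner {E : Type*}
    [NormedAddCommGroup E] [InnerProductSpace ℝ E] [CompleteSpace E]
    (Q : E ≃L[ℝ] E) (hsa : IsSelfAdjoint (Q : E →L[ℝ] E))
    (hpos : ∀ f : E, f ≠ 0 → 0 < ⟪Q f, f⟫) :
    ∃ c ≥ 0, ∀ f : E, ‖f‖ ^ 2 ≤ c * ⟪Q f, f⟫ := by
  have hnn : ∀ f : E, 0 ≤ ⟪Q f, f⟫ := fun f => by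
    by_cases hf : f = 0
    · simp [hf]
    · exact (hpos f hf).le
  have hsymm : ∀ a b : E, ⟪Q a, b⟫ = ⟪a, Q b⟫ := fun a b => hsa.isSymmetric a b
  set M : ℝ := ‖(Q : E →L[ℝ] E)‖ + 1 with hM
  have hM0 : 0 < M := by positivity
  set N : ℝ := ‖(Q.symm : E →L[ℝ] E)‖
  -- Nonnegativity of the form at `M f - Q f` gives `‖Q f‖² ≤ M ⟪Q f, f⟫`.
  have key : ∀ f : E, ‖Q f‖ ^ 2 ≤ M * ⟪Q f, f⟫ := fun f => by
    have h1 := hnn (M • f - Q f)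
    have h2 : ⟪Q (Q f), Q f⟫ ≤ M * ‖Q f‖ ^ 2 := by
      have ha : ‖Q (Q f)‖ ≤ ‖(Q : E →L[ℝ] E)‖ * ‖Q f‖ := (Q : E →L[ℝ] E).le_opNorm (Q f)
      have hb := real_inner_le_norm (Q (Q f)) (Q f)
      have hc : ‖Q (Q f)‖ * ‖Q f‖ ≤ ‖(Q : E →L[ℝ] E)‖ * ‖Q f‖ * ‖Q f‖ := by gcongr
      nlinarith [sq_nonneg ‖Q f‖]
    have h3 : ⟪Q (M • f - Q f), M • f - Q f⟫
        = M * (M * ⟪Q f, f⟫) - 2 * (M * ‖Q f‖ ^ 2) + ⟪Q (Q f), Q f⟫ := by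
      simp only [map_sub, map_smul, inner_sub_left, inner_sub_right, inner_smul_left,
        inner_smul_right, hsymm (Q f) f, real_inner_self_eq_norm_sq, conj_trivial]
      ring
    have h4 : M * ‖Q f‖ ^ 2 ≤ M * (M * ⟪Q f, f⟫) := by linarith
    exact le_of_mul_le_mul_left h4 hM0
  refine ⟨N ^ 2 * M, by positivity, fun f => ?_⟩
  have h5 : ‖f‖ ≤ N * ‖Q f‖ := by
    simpa using (Q.symm : E →L[ℝ] E).le_opNorm (Q f)
  calc ‖f‖ ^ 2 ≤ (N * ‖Q f‖) ^ 2 := by gcongr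
    _ = N ^ 2 * ‖Q f‖ ^ 2 := by ring
    _ ≤ N ^ 2 * (M * ⟪Q f, f⟫) := by gcongr; exact key f
    _ = N ^ 2 * M * ⟪Q f, f⟫ := by ring

/-- The second projection, which is `L` seen as a bounded operator on its graph, has range `R(L)`. -/
theorem range_snd_graph {𝓗 𝓕 : Type*}
    [NormedAddCommGroup 𝓗] [InnerProductSpace ℝ 𝓗]
    [NormedAddCommGroup 𝓕] [InnerProductSpace ℝ 𝓕] (L : 𝓗 →ₗ.[ℝ] 𝓕) :
    Set.range ((ContinuousLinearMap.snd ℝ 𝓗 𝓕).comp L.graph.subtypeL)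
      = {f : 𝓕 | ∃ x : L.domain, L x = f} := by
  ext f
  constructor
  · rintro ⟨⟨p, hp⟩, rfl⟩
    obtain ⟨x, -, hx⟩ := (LinearPMap.mem_graph_iff L).1 hp
    exact ⟨x, hx⟩
  · rintro ⟨x, rfl⟩
    exact ⟨⟨_, L.mem_graph x⟩, rfl⟩

/-- If `R(L)` and `H(N(L))` are closed, then so is the range of `x ↦ (L x, H x)`. -/
theorem isClosed_range_pair {𝓗 𝓕 𝓨 : Type*}
    [NormedAddCommGroup 𝓗] [InnerProductSpace ℝ 𝓗] [CompleteSpace 𝓗]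
    [NormedAddCommGroup 𝓕] [InnerProductSpace ℝ 𝓕] [CompleteSpace 𝓕]
    [NormedAddCommGroup 𝓨] [InnerProductSpace ℝ 𝓨]
    (L : 𝓗 →ₗ.[ℝ] 𝓕) (hLclosed : IsClosed (L.graph : Set (𝓗 × 𝓕))) (H : 𝓗 →L[ℝ] 𝓨)
    (h1 : IsClosed {f : 𝓕 | ∃ x : L.domain, L x = f})
    (h2 : IsClosed (H '' {x : 𝓗 | ∃ hx : x ∈ L.domain, L ⟨x, hx⟩ = 0})) :
    IsClosed {p : 𝓕 × 𝓨 | ∃ x : L.domain, p = (L x, H (x : 𝓗))} := by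
  have : CompleteSpace L.graph := hLclosed.completeSpace_coe
  obtain ⟨C, -, hC⟩ := exists_controlled_preimage
    ((ContinuousLinearMap.snd ℝ 𝓗 𝓕).comp L.graph.subtypeL) (by rw [range_snd_graph]; exact h1)
  have hC' : ∀ x : L.domain, ∃ e : L.domain, L e = L x ∧ ‖(e : 𝓗)‖ ≤ C * ‖L x‖ := fun x => by
    obtain ⟨⟨p, hp⟩, hpe, hpn⟩ := hC ⟨_, L.mem_graph x⟩
    obtain ⟨e, he1, he2⟩ := (LinearPMap.mem_graph_iff L).1 hp
    refine ⟨e, he2.trans hpe, ?_⟩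
    rw [he1]
    exact (norm_fst_le p).trans hpn
  rw [← isSeqClosed_iff_isClosed]
  rintro u ⟨f, g⟩ hu hlim
  choose x hx using hu
  have hlim1 : Filter.Tendsto (fun n => L (x n)) Filter.atTop (nhds f) := by
    simpa [hx] using (continuous_fst.tendsto (f, g)).comp hlim |>.congr
      (fun n => congrArg Prod.fst (hx n))
  have hlim2 : Filter.Tendsto (fun n => H (x n : 𝓗)) Filter.atTop (nhds g) := by
    simpa [hx] using (continuous_snd.tendsto (f, g)).comp hlim |>.congr
      (fun n => congrArg Prod.snd (hx n))
  obtain ⟨x₀, hx₀⟩ : ∃ x : L.domain, L x = f :=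
    h1.mem_of_tendsto hlim1 (Filter.Eventually.of_forall fun n => ⟨x n, rfl⟩)
  choose e he hen using fun n => hC' (x n - x₀)
  have he0 : Filter.Tendsto (fun n => (e n : 𝓗)) Filter.atTop (nhds 0) := by
    refine squeeze_zero_norm hen ?_
    have : Filter.Tendsto (fun n => C * ‖L (x n) - f‖) Filter.atTop (nhds (C * ‖f - f‖)) :=
      ((hlim1.sub_const f).norm).const_mul C
    simpa [LinearPMap.map_sub, hx₀] using this
  have hlim3 : Filter.Tendsto (fun n => H ((x n - x₀ - e n : L.domain) : 𝓗)) Filter.atTop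
      (nhds (g - H x₀)) := by
    have := (hlim2.sub_const (H x₀)).sub ((H.continuous.tendsto 0).comp he0)
    simpa [Function.comp_def] using this
  obtain ⟨k, ⟨hk, hk0⟩, hkg⟩ := h2.mem_of_tendsto hlim3 (Filter.Eventually.of_forall fun n =>
    ⟨_, ⟨(x n - x₀ - e n).2, by
      change L (x n - x₀ - e n) = 0
      rw [LinearPMap.map_sub, he, sub_self]⟩, rfl⟩)
  refine ⟨x₀ + ⟨k, hk⟩, Prod.ext ?_ ?_⟩
  · simp [LinearPMap.map_add, hx₀, hk0]
  · simp [hkg]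

/-- If `x ↦ (L x, H x)` has closed range, then every `ℓ` orthogonal to `N(L) ∩ N(H)` lies in
`R(L*) + R(H*)`. -/
theorem mem_range_adjoints_of_orthogonal {𝓗 𝓕 𝓨 : Type*}
    [NormedAddCommGroup 𝓗] [InnerProductSpace ℝ 𝓗] [CompleteSpace 𝓗]
    [NormedAddCommGroup 𝓕] [InnerProductSpace ℝ 𝓕] [CompleteSpace 𝓕]
    [NormedAddCommGroup 𝓨] [InnerProductSpace ℝ 𝓨] [CompleteSpace 𝓨]
    (L : 𝓗 →ₗ.[ℝ] 𝓕) (hLdense : Dense (L.domain : Set 𝓗))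
    (hLclosed : IsClosed (L.graph : Set (𝓗 × 𝓕))) (H : 𝓗 →L[ℝ] 𝓨)
    (hcl : IsClosed {p : 𝓕 × 𝓨 | ∃ x : L.domain, p = (L x, H (x : 𝓗))})
    (ℓ : 𝓗) (hℓ : ∀ x : L.domain, L x = 0 → H (x : 𝓗) = 0 → ⟪ℓ, (x : 𝓗)⟫ = 0) :
    ∃ z : L.adjoint.domain, ∃ u : 𝓨,
      ℓ = L.adjoint z + (ContinuousLinearMap.adjoint H) u := by
  have : CompleteSpace L.graph := hLclosed.completeSpace_coe
  let P : L.graph →L[ℝ] 𝓗 := (ContinuousLinearMap.fst ℝ 𝓗 𝓕).comp L.graph.subtypeL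
  let A : L.graph →L[ℝ] 𝓕 × 𝓨 :=
    ((ContinuousLinearMap.snd ℝ 𝓗 𝓕).comp L.graph.subtypeL).prod (H.comp P)
  have hA : IsClosed (Set.range A) := by
    convert hcl using 1
    ext q
    constructor
    · rintro ⟨⟨p, hp⟩, rfl⟩
      obtain ⟨x, hx1, hx2⟩ := (LinearPMap.mem_graph_iff L).1 hp
      refine ⟨x, Prod.ext hx2.symm ?_⟩
      change H p.1 = H x
      rw [hx1]
    · rintro ⟨x, rfl⟩
      exact ⟨⟨_, L.mem_graph x⟩, rfl⟩
  obtain ⟨g, hg⟩ := exists_functional_comp_eq A hA ((innerSL ℝ ℓ).comp P) (by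
    rintro ⟨p, hp⟩ hp0
    obtain ⟨x, hx1, hx2⟩ := (LinearPMap.mem_graph_iff L).1 hp
    have ha : p.2 = 0 := congrArg Prod.fst hp0
    have hb : H p.1 = 0 := congrArg Prod.snd hp0
    change ⟪ℓ, p.1⟫ = 0
    rw [← hx1]
    exact hℓ x (hx2.trans ha) (by rw [hx1, hb]))
  -- Riesz representatives of the two components of the extended functional
  let z : 𝓕 := (InnerProductSpace.toDual ℝ 𝓕).symm (g.comp (ContinuousLinearMap.inl ℝ 𝓕 𝓨))
  let u : 𝓨 := (InnerProductSpace.toDual ℝ 𝓨).symm (g.comp (ContinuousLinearMap.inr ℝ 𝓕 𝓨))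
  have hrep : ∀ x : L.domain, ⟪ℓ, (x : 𝓗)⟫ = ⟪z, L x⟫ + ⟪u, H (x : 𝓗)⟫ := fun x => by
    have h1 : ⟪z, L x⟫ = g (L x, 0) := InnerProductSpace.toDual_symm_apply
    have h2 : ⟪u, H (x : 𝓗)⟫ = g (0, H (x : 𝓗)) := InnerProductSpace.toDual_symm_apply
    have h3 : g (L x, H (x : 𝓗)) = ⟪ℓ, (x : 𝓗)⟫ := hg ⟨_, L.mem_graph x⟩
    rw [h1, h2, ← map_add, ← h3]
    simp
  have hadj : ∀ x : L.domain,
      ⟪ℓ - ContinuousLinearMap.adjoint H u, (x : 𝓗)⟫ = ⟪z, L x⟫ := fun x => by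
    rw [inner_sub_left, ContinuousLinearMap.adjoint_inner_left, hrep x]
    ring
  have hz : z ∈ L.adjoint.domain := LinearPMap.mem_adjoint_domain_of_exists z ⟨_, hadj⟩
  refine ⟨⟨z, hz⟩, u, ?_⟩
  rw [LinearPMap.adjoint_apply_eq hLdense ⟨z, hz⟩ hadj, sub_add_cancel]

/-- `L φ` and `y - H φ` are uniformly bounded over the a posteriori set. -/
theorem exists_bound_aPostSet {𝓗 𝓕 𝓨 : Type*}
    [NormedAddCommGroup 𝓗] [InnerProductSpace ℝ 𝓗]
    [NormedAddCommGroup 𝓕] [InnerProductSpace ℝ 𝓕] [CompleteSpace 𝓕]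
    [NormedAddCommGroup 𝓨] [InnerProductSpace ℝ 𝓨] [CompleteSpace 𝓨]
    (L : 𝓗 →ₗ.[ℝ] 𝓕) (H : 𝓗 →L[ℝ] 𝓨) (Q1 : 𝓕 ≃L[ℝ] 𝓕) (Q2 : 𝓨 ≃L[ℝ] 𝓨)
    (hQ1sa : IsSelfAdjoint (Q1 : 𝓕 →L[ℝ] 𝓕))
    (hQ2sa : IsSelfAdjoint (Q2 : 𝓨 →L[ℝ] 𝓨))
    (hQ1pos : ∀ f : 𝓕, f ≠ 0 → 0 < ⟪Q1 f, f⟫)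
    (hQ2pos : ∀ y : 𝓨, y ≠ 0 → 0 < ⟪Q2 y, y⟫) (y : 𝓨) :
    ∃ B : ℝ, ∀ φ : L.domain,
      (φ : 𝓗) ∈ aPostSet L H (Q1 : 𝓕 →L[ℝ] 𝓕) (Q2 : 𝓨 →L[ℝ] 𝓨) y →
        ‖L φ‖ ≤ B ∧ ‖y - H (φ : 𝓗)‖ ≤ B := by
  obtain ⟨c1, hc1, h1⟩ := exists_sq_norm_le_inner Q1 hQ1sa hQ1pos
  obtain ⟨c2, hc2, h2⟩ := exists_sq_norm_le_inner Q2 hQ2sa hQ2pos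
  have n1 : ∀ f : 𝓕, 0 ≤ ⟪Q1 f, f⟫ := fun f => by
    by_cases hf : f = 0
    · simp [hf]
    · exact (hQ1pos f hf).le
  have n2 : ∀ f : 𝓨, 0 ≤ ⟪Q2 f, f⟫ := fun f => by
    by_cases hf : f = 0
    · simp [hf]
    · exact (hQ2pos f hf).le
  -- `c ≤ (1 + c)²` turns the bounds on squared norms into bounds on norms
  refine ⟨1 + c1 + c2, fun φ hφ => ?_⟩
  obtain ⟨hd, hle⟩ := hφ
  have hle' : ⟪Q1 (L φ), L φ⟫ + ⟪Q2 (y - H (φ : 𝓗)), y - H (φ : 𝓗)⟫ ≤ 1 := hle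
  have m1 := n1 (L φ)
  have m2 := n2 (y - H (φ : 𝓗))
  constructor
  · refine abs_le_of_sq_le_sq' ?_ (by positivity) |>.2
    have := h1 (L φ)
    nlinarith [mul_le_mul_of_nonneg_left (show ⟪Q1 (L φ), L φ⟫ ≤ 1 by linarith) hc1]
  · refine abs_le_of_sq_le_sq' ?_ (by positivity) |>.2
    have := h2 (y - H (φ : 𝓗))
    nlinarith [mul_le_mul_of_nonneg_left
      (show ⟪Q2 (y - H (φ : 𝓗)), y - H (φ : 𝓗)⟫ ≤ 1 by linarith) hc2]

/-- **Theorem 3 (finiteness).** -/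
theorem minimax_aposteriori_error_finite_iff {𝓗 𝓕 𝓨 : Type*}
    [NormedAddCommGroup 𝓗] [InnerProductSpace ℝ 𝓗] [CompleteSpace 𝓗]
    [NormedAddCommGroup 𝓕] [InnerProductSpace ℝ 𝓕] [CompleteSpace 𝓕]
    [NormedAddCommGroup 𝓨] [InnerProductSpace ℝ 𝓨] [CompleteSpace 𝓨]
    -- `L` closed densely defined
    (L : 𝓗 →ₗ.[ℝ] 𝓕) (hLdense : Dense (L.domain : Set 𝓗))
    (hLclosed : IsClosed (L.graph : Set (𝓗 × 𝓕)))
    (H : 𝓗 →L[ℝ] 𝓨)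
    -- `Q1`, `Q2` bounded self-adjoint positive definite with bounded inverses
    (Q1 : 𝓕 ≃L[ℝ] 𝓕) (Q2 : 𝓨 ≃L[ℝ] 𝓨)
    (hQ1sa : IsSelfAdjoint (Q1 : 𝓕 →L[ℝ] 𝓕))
    (hQ2sa : IsSelfAdjoint (Q2 : 𝓨 →L[ℝ] 𝓨))
    (hQ1pos : ∀ f : 𝓕, f ≠ 0 → 0 < ⟪Q1 f, f⟫)
    (hQ2pos : ∀ y : 𝓨, y ≠ 0 → 0 < ⟪Q2 y, y⟫)
    -- Assumption 1 or Assumption 2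
    (hassumption :
      (IsClosed {f : 𝓕 | ∃ x : L.domain, L x = f} ∧
        IsClosed (H '' {x : 𝓗 | ∃ hx : x ∈ L.domain, L ⟨x, hx⟩ = 0})) ∨
      IsClosed {p : 𝓕 × 𝓨 | ∃ x : L.domain, p = (L x, H (x : 𝓗))})
    -- observation and direction; the a posteriori set is nonempty
    (y : 𝓨) (ℓ : 𝓗)
    (hne : (aPostSet L H (Q1 : 𝓕 →L[ℝ] 𝓕) (Q2 : 𝓨 →L[ℝ] 𝓨) y).Nonempty) :
    rhoHat L H (Q1 : 𝓕 →L[ℝ] 𝓕) (Q2 : 𝓨 →L[ℝ] 𝓨) y ℓ < ⊤ ↔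
      ∃ z : L.adjoint.domain, ∃ u : 𝓨,
        ℓ = L.adjoint z + (ContinuousLinearMap.adjoint H) u := by
  have hcl : IsClosed {p : 𝓕 × 𝓨 | ∃ x : L.domain, p = (L x, H (x : 𝓗))} := by
    rcases hassumption with ⟨h1, h2⟩ | h
    · exact isClosed_range_pair L hLclosed H h1 h2
    · exact h
  constructor
  · intro hfin
    simp only [rhoHat, iInf_lt_iff] at hfin
    obtain ⟨φ, ⟨hφ, hφ1⟩, hρ⟩ := hfin
    refine mem_range_adjoints_of_orthogonal L hLdense hLclosed H hcl ℓ fun n hLn hHn => ?_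
    set C : ℝ := (rhoErr L H (Q1 : 𝓕 →L[ℝ] 𝓕) (Q2 : 𝓨 →L[ℝ] 𝓨) y ℓ φ).toReal
    -- the whole line `φ + t n` stays in the a posteriori set
    have hline : ∀ t : ℝ, |t * ⟪ℓ, (n : 𝓗)⟫| ≤ C := fun t => by
      have hmem : φ + t • (n : 𝓗) ∈
          aPostSet L H (Q1 : 𝓕 →L[ℝ] 𝓕) (Q2 : 𝓨 →L[ℝ] 𝓨) y := by
        refine ⟨L.domain.add_mem hφ (L.domain.smul_mem t n.2), ?_⟩
        have e1 : L ⟨φ + t • (n : 𝓗), L.domain.add_mem hφ (L.domain.smul_mem t n.2)⟩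
            = L ⟨φ, hφ⟩ := by
          change L (⟨φ, hφ⟩ + t • n) = _
          rw [LinearPMap.map_add, LinearPMap.map_smul, hLn, smul_zero, add_zero]
        have e2 : H (φ + t • (n : 𝓗)) = H φ := by simp [hHn]
        rw [e1, e2]
        exact hφ1
      have hle : ENNReal.ofReal |⟪ℓ, φ⟫ - ⟪ℓ, φ + t • (n : 𝓗)⟫|
          ≤ rhoErr L H (Q1 : 𝓕 →L[ℝ] 𝓕) (Q2 : 𝓨 →L[ℝ] 𝓨) y ℓ φ :=
        le_iSup₂_of_le (φ + t • (n : 𝓗)) hmem le_rfl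
      have := (ENNReal.ofReal_le_iff_le_toReal hρ.ne).1 hle
      rwa [inner_add_right, inner_smul_right, sub_add_cancel_left, abs_neg] at this
    by_contra hne0
    have := hline ((C + 1) / ⟪ℓ, (n : 𝓗)⟫)
    rw [div_mul_cancel₀ _ hne0] at this
    linarith [le_abs_self (C + 1)]
  · rintro ⟨z, u, rfl⟩
    obtain ⟨B, hB⟩ := exists_bound_aPostSet L H Q1 Q2 hQ1sa hQ2sa hQ1pos hQ2pos y
    obtain ⟨φ, hφ⟩ := hne
    refine lt_of_le_of_lt (iInf₂_le φ hφ) (lt_of_le_of_lt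
      (iSup₂_le (a := ENNReal.ofReal (‖(z : 𝓕)‖ * (B + B) + ‖u‖ * (B + B))) fun ψ hψ => ?_)
      ENNReal.ofReal_lt_top)
    refine ENNReal.ofReal_le_ofReal ?_
    obtain ⟨b1, b2⟩ := hB ⟨φ, hφ.1⟩ hφ
    obtain ⟨b3, b4⟩ := hB ⟨ψ, hψ.1⟩ hψ
    have hrep : ∀ x : L.domain, ⟪L.adjoint z + ContinuousLinearMap.adjoint H u, (x : 𝓗)⟫
        = ⟪(z : 𝓕), L x⟫ + ⟪u, H (x : 𝓗)⟫ := fun x => by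
      rw [inner_add_left, ContinuousLinearMap.adjoint_inner_left,
        LinearPMap.adjoint_isFormalAdjoint hLdense z x]
    have e : ⟪L.adjoint z + ContinuousLinearMap.adjoint H u, φ⟫
        - ⟪L.adjoint z + ContinuousLinearMap.adjoint H u, ψ⟫
        = ⟪(z : 𝓕), L ⟨φ, hφ.1⟩ - L ⟨ψ, hψ.1⟩⟫ + ⟪u, (y - H ψ) - (y - H φ)⟫ := by
      rw [hrep ⟨φ, hφ.1⟩, hrep ⟨ψ, hψ.1⟩, sub_sub_sub_cancel_left, inner_sub_right,
        inner_sub_right]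
      ring
    rw [e]
    refine (abs_add_le _ _).trans (add_le_add ?_ ?_)
    · refine (abs_real_inner_le_norm _ _).trans ?_
      gcongr
      exact (norm_sub_le _ _).trans (add_le_add b1 b3)
    · refine (abs_real_inner_le_norm _ _).trans ?_
      gcongr
      exact (norm_sub_le _ _).trans (add_le_add b4 b2)
end

section
/- Under Assumption 1 or Assumption 2, suppose ℓ ∈ R(L*) + R(H*) and let (q̂, φ̂) with φ̂ ∈ D(L) and q̂ in the domain of L* be any solution of the system L*q̂ = H*Q2(y − H φ̂), L φ̂ = Q1⁻¹ q̂. Then the minimax a posteriori error in the direction ℓ equals ρ̂(ℓ) = (1 − (Q2 y, y − H φ̂))^{1/2} · σ̂(ℓ), the infimum defining ρ̂(ℓ) is attained at φ̂, and the minimax a posteriori estimation is (ℓ, φ̂) = (û, y) with û = Q2 H p̂, where p̂ and σ̂(ℓ) are determined by the a priori system L*ẑ = ℓ − H*Q2Hp̂, Lp̂ = Q1⁻¹ẑ with σ̂(ℓ) = (ℓ, p̂)^{1/2}. -/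
/-!
Let `B(x, x') = (Q1 L x, L x') + (Q2 H x, H x')`, a positive semidefinite symmetric form on `D(L)`
(`energyForm`), and let `J(φ) = (Q1 L φ, L φ) + (Q2 (y - H φ), y - H φ)` be the functional that
defines `G_y`.

The system for `(q̂, φ̂)` is the Euler equation of `J`: testing it against `x ∈ D(L)` gives
`(Q1 L φ̂, L x) = (Q2 (y - H φ̂), H x)`. Hence `J(φ̂ + x) = J(φ̂) + B(x, x)` and
`J(φ̂) = (Q2 y, y - H φ̂) =: c`, so `G_y = φ̂ + {x : B(x, x) ≤ 1 - c}` is a `B`-ball centred at `φ̂`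
(`mem_aPostSet_add_iff`); since it is nonempty, `c ≤ 1`. The a priori system says that `p̂`
represents `ℓ` with respect to `B`: `(ℓ, x) = B(p̂, x)` on `D(L)`.

Cauchy–Schwarz for `B` bounds `|(ℓ, x)|` on the ball by `s = (1 - c)^{1/2} (ℓ, p̂)^{1/2}`, and
multiples `± t p̂` of `p̂` in the ball attain this bound. So `ℓ` maps `G_y` into
`[(ℓ, φ̂) - s, (ℓ, φ̂) + s]` with both endpoints attained, and the best centre is `(ℓ, φ̂)`.
-/

/-!
Minimax a posteriori estimation: **Theorem 3 (representation part)**.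
If `ℓ ∈ R(L*) + R(H*)` and `(q̂, φ̂)` solves `L* q̂ = H* Q2 (y − H φ̂)`,
`L φ̂ = Q1⁻¹ q̂`, then `ρ̂(ℓ) = (1 − (Q2 y, y − H φ̂))^{1/2} σ̂(ℓ)`, the infimum
defining `ρ̂(ℓ)` is attained at `φ̂` and the minimax a posteriori estimation is
`(ℓ, φ̂) = (û, y)`, `û = Q2 H p̂`, where `p̂` solves the a priori system and
`σ̂(ℓ) = (ℓ, p̂)^{1/2}`.
-/

open scoped ENNReal RealInnerProductSpace

/-- The energy form `B(x, x') = (Q1 L x, L x') + (Q2 H x, H x')` on the domain of `L`. -/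
noncomputable def energyForm {𝓗 𝓕 𝓨 : Type*}
    [NormedAddCommGroup 𝓗] [InnerProductSpace ℝ 𝓗]
    [NormedAddCommGroup 𝓕] [InnerProductSpace ℝ 𝓕]
    [NormedAddCommGroup 𝓨] [InnerProductSpace ℝ 𝓨]
    (L : 𝓗 →ₗ.[ℝ] 𝓕) (H : 𝓗 →L[ℝ] 𝓨) (Q1 : 𝓕 →L[ℝ] 𝓕) (Q2 : 𝓨 →L[ℝ] 𝓨) :
    LinearMap.BilinForm ℝ L.domain :=
  (innerₗ 𝓕).compl₁₂ (Q1.toLinearMap ∘ₗ L.toFun) L.toFun +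
    (innerₗ 𝓨).compl₁₂ (Q2.toLinearMap ∘ₗ H.toLinearMap ∘ₗ L.domain.subtype)
      (H.toLinearMap ∘ₗ L.domain.subtype)

section

variable {𝓗 𝓕 𝓨 : Type*}
    [NormedAddCommGroup 𝓗] [InnerProductSpace ℝ 𝓗]
    [NormedAddCommGroup 𝓕] [InnerProductSpace ℝ 𝓕]
    [NormedAddCommGroup 𝓨] [InnerProductSpace ℝ 𝓨]
    {L : 𝓗 →ₗ.[ℝ] 𝓕} {H : 𝓗 →L[ℝ] 𝓨} {Q1 : 𝓕 →L[ℝ] 𝓕} {Q2 : 𝓨 →L[ℝ] 𝓨}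

theorem energyForm_apply (x x' : L.domain) :
    energyForm L H Q1 Q2 x x' = ⟪Q1 (L x), L x'⟫ + ⟪Q2 (H x), H x'⟫ := rfl

/-- A point `φ̂` satisfying the Euler equation of the functional defining `G_y` is its minimizer,
with minimal value `(Q2 y, y - H φ̂)`, so that `G_y` is the ball of the energy form around `φ̂`
with squared radius `1 - (Q2 y, y - H φ̂)`. -/
theorem mem_aPostSet_add_iff
    (hQ1 : ∀ f g, ⟪Q1 f, g⟫ = ⟪f, Q1 g⟫) (hQ2 : ∀ u v, ⟪Q2 u, v⟫ = ⟪u, Q2 v⟫)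
    {y : 𝓨} {φh : L.domain}
    (hEuler : ∀ x : L.domain, ⟪Q1 (L φh), L x⟫ = ⟪Q2 (y - H φh), H x⟫) (x : L.domain) :
    ((φh + x : L.domain) : 𝓗) ∈ aPostSet L H Q1 Q2 y ↔
      energyForm L H Q1 Q2 x x ≤ 1 - ⟪Q2 y, y - H φh⟫ := by
  have key : ⟪Q1 (L (φh + x)), L (φh + x)⟫ +
      ⟪Q2 (y - H (φh + x : L.domain)), y - H (φh + x : L.domain)⟫ =
      ⟪Q2 y, y - H φh⟫ + energyForm L H Q1 Q2 x x := by
    have h1 := hEuler φh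
    have h2 := hEuler x
    have e1 : ⟪Q1 (L x), L φh⟫ = ⟪Q1 (L φh), L x⟫ := by rw [hQ1, real_inner_comm]
    have e2 : ⟪Q2 (H x), H φh⟫ = ⟪Q2 (H φh), H x⟫ := by rw [hQ2, real_inner_comm]
    have e3 : ⟪Q2 (H x), y⟫ = ⟪Q2 y, H x⟫ := by rw [hQ2, real_inner_comm]
    have e4 : ⟪Q2 (H φh), y⟫ = ⟪Q2 y, H φh⟫ := by rw [hQ2, real_inner_comm]
    simp only [energyForm_apply, L.map_add, map_add, map_sub, Submodule.coe_add, inner_add_left,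
      inner_add_right, inner_sub_left, inner_sub_right] at h1 h2 ⊢
    linarith
  constructor
  · rintro ⟨_, h⟩
    have h' := key.symm.trans_le h
    linarith
  · intro h
    refine ⟨(φh + x).2, key.trans_le ?_⟩
    linarith

/-- If the functional `ℓ` maps `G_y` into `[(ℓ, φ̂) - s, (ℓ, φ̂) + s]` and attains both endpoints,
then `φ̂` is an optimal centre and the minimax error is `s`. -/
theorem rhoErr_eq_and_rhoHat_eq {y : 𝓨} {ℓ φh ψ₁ ψ₂ : 𝓗} {s : ℝ}
    (hφ : φh ∈ aPostSet L H Q1 Q2 y)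
    (hle : ∀ ψ ∈ aPostSet L H Q1 Q2 y, |⟪ℓ, φh⟫ - ⟪ℓ, ψ⟫| ≤ s)
    (h₁ : ψ₁ ∈ aPostSet L H Q1 Q2 y) (h₂ : ψ₂ ∈ aPostSet L H Q1 Q2 y)
    (e₁ : ⟪ℓ, ψ₁⟫ = ⟪ℓ, φh⟫ + s) (e₂ : ⟪ℓ, ψ₂⟫ = ⟪ℓ, φh⟫ - s) :
    rhoErr L H Q1 Q2 y ℓ φh = ENNReal.ofReal s ∧
      rhoHat L H Q1 Q2 y ℓ = ENNReal.ofReal s := by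
  have upper : rhoErr L H Q1 Q2 y ℓ φh ≤ ENNReal.ofReal s :=
    iSup₂_le fun ψ hψ => ENNReal.ofReal_le_ofReal (hle ψ hψ)
  have lower : ENNReal.ofReal s ≤ rhoHat L H Q1 Q2 y ℓ := by
    refine le_iInf₂ fun φ _ => ?_
    -- the endpoint on the far side of `(ℓ, φ̂)` from `(ℓ, φ)` is at distance at least `s`
    rcases le_total ⟪ℓ, φ⟫ ⟪ℓ, φh⟫ with h | h
    · refine le_trans (ENNReal.ofReal_le_ofReal ?_)
        (le_iSup₂ (f := fun ψ (_ : ψ ∈ aPostSet L H Q1 Q2 y) =>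
          ENNReal.ofReal |⟪ℓ, φ⟫ - ⟪ℓ, ψ⟫|) ψ₁ h₁)
      rw [e₁]
      exact le_trans (by linarith) (neg_le_abs _)
    · refine le_trans (ENNReal.ofReal_le_ofReal ?_)
        (le_iSup₂ (f := fun ψ (_ : ψ ∈ aPostSet L H Q1 Q2 y) =>
          ENNReal.ofReal |⟪ℓ, φ⟫ - ⟪ℓ, ψ⟫|) ψ₂ h₂)
      rw [e₂]
      exact le_trans (by linarith) (le_abs_self _)
  have mid : rhoHat L H Q1 Q2 y ℓ ≤ rhoErr L H Q1 Q2 y ℓ φh := iInf₂_le φh hφ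
  exact ⟨le_antisymm upper (lower.trans mid), le_antisymm (mid.trans upper) lower⟩

end

/-- **Theorem 3 (minimax a posteriori estimation).** -/
theorem minimax_aposteriori_estimation {𝓗 𝓕 𝓨 : Type*}
    [NormedAddCommGroup 𝓗] [InnerProductSpace ℝ 𝓗] [CompleteSpace 𝓗]
    [NormedAddCommGroup 𝓕] [InnerProductSpace ℝ 𝓕] [CompleteSpace 𝓕]
    [NormedAddCommGroup 𝓨] [InnerProductSpace ℝ 𝓨] [CompleteSpace 𝓨]
    -- `L` closed densely defined
    (L : 𝓗 →ₗ.[ℝ] 𝓕) (hLdense : Dense (L.domain : Set 𝓗))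
    (hLclosed : IsClosed (L.graph : Set (𝓗 × 𝓕)))
    (H : 𝓗 →L[ℝ] 𝓨)
    -- `Q1`, `Q2` bounded self-adjoint positive definite with bounded inverses
    (Q1 : 𝓕 ≃L[ℝ] 𝓕) (Q2 : 𝓨 ≃L[ℝ] 𝓨)
    (hQ1sa : IsSelfAdjoint (Q1 : 𝓕 →L[ℝ] 𝓕))
    (hQ2sa : IsSelfAdjoint (Q2 : 𝓨 →L[ℝ] 𝓨))
    (hQ1pos : ∀ f : 𝓕, f ≠ 0 → 0 < ⟪Q1 f, f⟫)
    (hQ2pos : ∀ y : 𝓨, y ≠ 0 → 0 < ⟪Q2 y, y⟫)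
    -- Assumption 1 or Assumption 2
    (hassumption :
      (IsClosed {f : 𝓕 | ∃ x : L.domain, L x = f} ∧
        IsClosed (H '' {x : 𝓗 | ∃ hx : x ∈ L.domain, L ⟨x, hx⟩ = 0})) ∨
      IsClosed {p : 𝓕 × 𝓨 | ∃ x : L.domain, p = (L x, H (x : 𝓗))})
    -- observation and direction; the a posteriori set is nonempty
    (y : 𝓨) (ℓ : 𝓗)
    (hne : (aPostSet L H (Q1 : 𝓕 →L[ℝ] 𝓕) (Q2 : 𝓨 →L[ℝ] 𝓨) y).Nonempty)
    -- `ℓ ∈ R(L*) + R(H*)`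
    (hℓ : ∃ z : L.adjoint.domain, ∃ u : 𝓨,
        ℓ = L.adjoint z + (ContinuousLinearMap.adjoint H) u)
    -- `(q̂, φ̂)` solves `L* q̂ = H* Q2 (y − H φ̂)`, `L φ̂ = Q1⁻¹ q̂`
    (qh : L.adjoint.domain) (φh : L.domain)
    (hsys₁ : L.adjoint qh =
      (ContinuousLinearMap.adjoint H) ((Q2 : 𝓨 →L[ℝ] 𝓨) (y - H (φh : 𝓗))))
    (hsys₂ : L φh = Q1.symm (qh : 𝓕))
    -- `(ẑ, p̂)` solves the a priori system `L* ẑ = ℓ − H* Q2 H p̂`,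
    -- `L p̂ = Q1⁻¹ ẑ`, so that `σ̂(ℓ) = (ℓ, p̂)^{1/2}`
    (zh : L.adjoint.domain) (ph : L.domain)
    (hapr₁ : L.adjoint zh =
      ℓ - (ContinuousLinearMap.adjoint H) ((Q2 : 𝓨 →L[ℝ] 𝓨) (H (ph : 𝓗))))
    (hapr₂ : L ph = Q1.symm (zh : 𝓕)) :
    -- `ρ̂(ℓ) = (1 − (Q2 y, y − H φ̂))^{1/2} ⬝ σ̂(ℓ)`
    rhoHat L H (Q1 : 𝓕 →L[ℝ] 𝓕) (Q2 : 𝓨 →L[ℝ] 𝓨) y ℓ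
        = ENNReal.ofReal
            (Real.sqrt (1 - ⟪(Q2 : 𝓨 →L[ℝ] 𝓨) y, y - H (φh : 𝓗)⟫) *
              Real.sqrt ⟪ℓ, (ph : 𝓗)⟫) ∧
    -- the infimum defining `ρ̂(ℓ)` is attained at `φ̂` ...
    (φh : 𝓗) ∈ aPostSet L H (Q1 : 𝓕 →L[ℝ] 𝓕) (Q2 : 𝓨 →L[ℝ] 𝓨) y ∧
    rhoErr L H (Q1 : 𝓕 →L[ℝ] 𝓕) (Q2 : 𝓨 →L[ℝ] 𝓨) y ℓ (φh : 𝓗)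
        = rhoHat L H (Q1 : 𝓕 →L[ℝ] 𝓕) (Q2 : 𝓨 →L[ℝ] 𝓨) y ℓ ∧
    -- ... and the minimax a posteriori estimation is `(ℓ, φ̂) = (û, y)`,
    -- `û = Q2 H p̂`
    ⟪ℓ, (φh : 𝓗)⟫ = ⟪(Q2 : 𝓨 →L[ℝ] 𝓨) (H (ph : 𝓗)), y⟫ := by
  have hQ1 : ∀ f g, ⟪(Q1 : 𝓕 →L[ℝ] 𝓕) f, g⟫ = ⟪f, (Q1 : 𝓕 →L[ℝ] 𝓕) g⟫ := hQ1sa.isSymmetric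
  have hQ2 : ∀ u v, ⟪(Q2 : 𝓨 →L[ℝ] 𝓨) u, v⟫ = ⟪u, (Q2 : 𝓨 →L[ℝ] 𝓨) v⟫ := hQ2sa.isSymmetric
  have hadj := L.adjoint_isFormalAdjoint hLdense
  have hQφ : (Q1 : 𝓕 →L[ℝ] 𝓕) (L φh) = qh := by simp [hsys₂]
  have hQp : (Q1 : 𝓕 →L[ℝ] 𝓕) (L ph) = zh := by simp [hapr₂]
  have hEuler : ∀ x : L.domain, ⟪(Q1 : 𝓕 →L[ℝ] 𝓕) (L φh), L x⟫ =
      ⟪(Q2 : 𝓨 →L[ℝ] 𝓨) (y - H φh), H x⟫ := fun x => by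
    rw [hQφ, ← hadj qh x, hsys₁, ContinuousLinearMap.adjoint_inner_left]
  have hball := mem_aPostSet_add_iff hQ1 hQ2 hEuler
  set B := energyForm L H (Q1 : 𝓕 →L[ℝ] 𝓕) (Q2 : 𝓨 →L[ℝ] 𝓨) with hB
  have hℓB : ∀ x : L.domain, ⟪ℓ, (x : 𝓗)⟫ = B ph x := fun x => by
    have h := hadj zh x
    rw [hapr₁, inner_sub_left, ContinuousLinearMap.adjoint_inner_left] at h
    rw [hB, energyForm_apply, hQp]
    linarith
  have hBnonneg : ∀ x, 0 ≤ B x x := fun x => by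
    rw [hB, energyForm_apply]
    refine add_nonneg ?_ ?_
    · rcases eq_or_ne (L x) 0 with h | h
      · simp [h]
      · exact (hQ1pos _ h).le
    · rcases eq_or_ne (H x) 0 with h | h
      · simp [h]
      · exact (hQ2pos _ h).le
  have hBsymm : LinearMap.IsSymm B := ⟨fun x x' => by
    simp only [hB, energyForm_apply, RingHom.id_apply]
    rw [hQ1, hQ2, real_inner_comm, real_inner_comm (H x)]⟩
  set r := 1 - ⟪(Q2 : 𝓨 →L[ℝ] 𝓨) y, y - H (φh : 𝓗)⟫ with hr
  have hmem : ∀ ψ ∈ aPostSet L H (Q1 : 𝓕 →L[ℝ] 𝓕) (Q2 : 𝓨 →L[ℝ] 𝓨) y,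
      ∃ x : L.domain, ψ = φh + x ∧ B x x ≤ r := by
    intro ψ hψ
    obtain ⟨hd, -⟩ := id hψ
    have e : φh + (⟨ψ, hd⟩ - φh) = (⟨ψ, hd⟩ : L.domain) := by abel
    refine ⟨⟨ψ, hd⟩ - φh, by simp, (hball _).1 ?_⟩
    rw [e]
    exact hψ
  have hr0 : 0 ≤ r := by
    obtain ⟨ψ, hψ⟩ := hne
    obtain ⟨x, -, hx⟩ := hmem ψ hψ
    exact (hBnonneg x).trans hx
  have hφmem : (φh : 𝓗) ∈ aPostSet L H (Q1 : 𝓕 →L[ℝ] 𝓕) (Q2 : 𝓨 →L[ℝ] 𝓨) y := by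
    simpa using (hball 0).2 (by simpa using hr0)
  have hσ : ⟪ℓ, (ph : 𝓗)⟫ = B ph ph := hℓB ph
  rw [hσ]
  set b := B ph ph with hb
  have hb0 : 0 ≤ b := hBnonneg ph
  -- The scaling putting `t • p̂` on the boundary of the ball; it is `0` when `B(p̂, p̂) = 0`, in
  -- which case `ℓ` vanishes on `D(L)` and any point of the ball is extremal.
  set t := √r / √b with ht
  have htb : t * b = √r * √b := by
    rcases hb0.eq_or_lt with h | h
    · simp [← h]
    · have := Real.sqrt_pos.2 h
      rw [ht, div_mul_eq_mul_div, div_eq_iff this.ne', mul_assoc, Real.mul_self_sqrt hb0]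
  have htt : t * (t * b) ≤ r := by
    rcases hb0.eq_or_lt with h | h
    · simpa [← h] using hr0
    · have := Real.sqrt_pos.2 h
      have e : t * (√r * √b) = √r * √r := by
        rw [ht]
        field_simp
      rw [htb, e, Real.mul_self_sqrt hr0]
  obtain ⟨hE, hI⟩ := rhoErr_eq_and_rhoHat_eq (ℓ := ℓ) (s := √r * √b) hφmem
    (fun ψ hψ => by
      obtain ⟨x, rfl, hx⟩ := hmem ψ hψ
      rw [inner_add_right, sub_add_cancel_left, abs_neg, hℓB, mul_comm, ← Real.sqrt_mul hb0]
      refine Real.abs_le_sqrt ((B.apply_sq_le_of_symm hBnonneg hBsymm ph x).trans ?_)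
      exact mul_le_mul_of_nonneg_left hx hb0)
    ((hball (t • ph)).2 (by simpa using htt))
    ((hball (-(t • ph))).2 (by simpa using htt))
    (by rw [Submodule.coe_add, inner_add_right, hℓB (t • ph), map_smul, smul_eq_mul, htb])
    (by rw [Submodule.coe_add, inner_add_right, hℓB (-(t • ph)), map_neg, map_smul, smul_eq_mul,
          htb, sub_eq_add_neg])
  refine ⟨hI, hφmem, hE.trans hI.symm, ?_⟩
  have h := hEuler ph
  rw [hQ1, real_inner_comm, map_sub, inner_sub_left, hQ2 y, real_inner_comm _ y,
    hQ2 (H φh), real_inner_comm _ (H φh)] at h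
  rw [hℓB, hB, energyForm_apply, h]
  ring
end

section
/- The operator 𝓓 defined on W_F ⊆ L²([t₀,T], ℝⁿ) by 𝓓x = ( t ↦ (d/dt)(F x(t)) − C(t)x(t), F x(t₀) ), taking values in L²([t₀,T], ℝᵐ) × ℝᵐ, is a closed, densely defined linear operator: its graph {(x, 𝓓x) : x ∈ W_F} is closed in L²([t₀,T], ℝⁿ) × (L²([t₀,T], ℝᵐ) × ℝᵐ), and W_F is dense in L²([t₀,T], ℝⁿ). -/
/-!
On `[t₀, T]`, a triple `(x, (y, v))` lies on the graph of `𝓓` exactly when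
`F x(t) = v + ∫_{t₀}^t (y(s) + C(s) x(s)) ds` for almost every `t` (`mem_graphD_iff`); no
derivative appears any more. This condition survives `L²` limits: along a subsequence the
left-hand side converges almost everywhere, and the right-hand side converges for every `t`
because `C` is bounded on `[t₀, T]` and `L²` convergence implies `L¹` convergence there
(`tendsto_intervalIntegral_clm_apply`). Hence the graph is closed. The domain is dense since it
contains all smooth compactly supported functions.
-/

/-!
**The operator 𝓓 induced by a linear DAE is closed and densely defined.**
`𝓓 x = ( d/dt (F x) − C x , F x(t₀) )` on
`W_F = {x ∈ L²([t₀,T],ℝⁿ) : t ↦ F x(t) is absolutely continuous}`.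
-/

open MeasureTheory
open scoped ENNReal

/-- The linear map on Euclidean spaces induced by a matrix. -/
noncomputable def matVec {ι κ : Type*} [Fintype ι] [Fintype κ] [DecidableEq κ]
    (A : Matrix ι κ ℝ) (v : EuclideanSpace ℝ κ) : EuclideanSpace ℝ ι :=
  Matrix.toEuclideanLin A v

/-- `g`, `v` witness that `t ↦ F x(t)` is absolutely continuous on `[t₀, T]`
with `F x(t) = v + ∫_{t₀}^t g(s) ds` a.e.; so `v = F x(t₀)` and
`g = d/dt (F x)`. -/
def IsDerivRepr {ι κ : Type*} [Fintype ι] [Fintype κ] [DecidableEq κ]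
    (t₀ T : ℝ) (F : Matrix ι κ ℝ) (x : ℝ → EuclideanSpace ℝ κ)
    (g : ℝ → EuclideanSpace ℝ ι) (v : EuclideanSpace ℝ ι) : Prop :=
  IntervalIntegrable g volume t₀ T ∧
    ∀ᵐ t ∂(volume.restrict (Set.Icc t₀ T)),
      matVec F (x t) = v + ∫ s in t₀..t, g s

/-- The domain `W_F ⊆ L²([t₀,T], ℝⁿ)` of the operator `𝓓`. -/
def WF {ι κ : Type*} [Fintype ι] [Fintype κ] [DecidableEq κ]
    (t₀ T : ℝ) (F : Matrix ι κ ℝ) :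
    Set (Lp (EuclideanSpace ℝ κ) 2 (volume.restrict (Set.Icc t₀ T))) :=
  {x | ∃ g v, IsDerivRepr t₀ T F (⇑x) g v}

/-- The graph of the operator
`𝓓 x = ( d/dt (F x) − C x , F x(t₀) )`, `x ∈ W_F`. -/
def graphD {ι κ : Type*} [Fintype ι] [Fintype κ] [DecidableEq κ]
    (t₀ T : ℝ) (F : Matrix ι κ ℝ) (C : ℝ → Matrix ι κ ℝ) :
    Set ((Lp (EuclideanSpace ℝ κ) 2 (volume.restrict (Set.Icc t₀ T))) ×
      ((Lp (EuclideanSpace ℝ ι) 2 (volume.restrict (Set.Icc t₀ T))) ×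
        EuclideanSpace ℝ ι)) :=
  {p | ∃ g v, IsDerivRepr t₀ T F (⇑p.1) g v ∧ p.2.2 = v ∧
    ∀ᵐ t ∂(volume.restrict (Set.Icc t₀ T)),
      (⇑p.2.1) t = g t - matVec (C t) ((⇑p.1) t)}

/-- `matVec` as a continuous linear map depending linearly on the matrix. -/
noncomputable def matVecCLM (m n : ℕ) : Matrix (Fin m) (Fin n) ℝ →ₗ[ℝ]
    (EuclideanSpace ℝ (Fin n) →L[ℝ] EuclideanSpace ℝ (Fin m)) :=
  LinearMap.toContinuousLinearMap.toLinearMap ∘ₗ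
    (Matrix.toEuclideanLin (𝕜 := ℝ) (m := Fin m) (n := Fin n)).toLinearMap

lemma matVecCLM_apply {m n : ℕ} (A : Matrix (Fin m) (Fin n) ℝ)
    (v : EuclideanSpace ℝ (Fin n)) : matVecCLM m n A v = matVec A v := rfl

section

variable {E G : Type*} [NormedAddCommGroup E] [NormedSpace ℝ E]
  [NormedAddCommGroup G] [NormedSpace ℝ G]

/-- Multiplication by a continuous operator-valued function `A` on `[a, b]` maps `L²` to `L¹`. -/
lemma integrable_clm_apply {a b : ℝ} {A : ℝ → E →L[ℝ] G} (hA : ContinuousOn A (Set.Icc a b))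
    (x : Lp E 2 (volume.restrict (Set.Icc a b))) :
    Integrable (fun t => A t (x t)) (volume.restrict (Set.Icc a b)) := by
  obtain ⟨M, hM⟩ := isCompact_Icc.exists_bound_of_continuousOn hA
  have hx : Integrable (fun t => x t) (volume.restrict (Set.Icc a b)) :=
    (Lp.memLp x).integrable (by norm_num)
  refine (hx.norm.const_mul M).mono'
    ((ContinuousLinearMap.id ℝ (E →L[ℝ] G)).aestronglyMeasurable_comp₂
      (hA.aestronglyMeasurable measurableSet_Icc) hx.aestronglyMeasurable) ?_
  filter_upwards [ae_restrict_mem measurableSet_Icc] with t ht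
  exact (A t).le_of_opNorm_le (hM t ht) (x t)

/-- The functional `x ↦ ∫_a^t A(s) x(s) ds` is sequentially continuous on `L²([a, b])`: `A` is
bounded on `[a, b]`, and `L²` convergence implies `L¹` convergence on a finite measure space. -/
lemma tendsto_intervalIntegral_clm_apply {a b : ℝ} {A : ℝ → E →L[ℝ] G}
    (hA : ContinuousOn A (Set.Icc a b))
    {x : ℕ → Lp E 2 (volume.restrict (Set.Icc a b))}
    {x' : Lp E 2 (volume.restrict (Set.Icc a b))}
    (hx : Filter.Tendsto x Filter.atTop (nhds x')) {t : ℝ} (ht : t ∈ Set.Icc a b) :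
    Filter.Tendsto (fun k => ∫ s in a..t, A s (x k s)) Filter.atTop
      (nhds (∫ s in a..t, A s (x' s))) := by
  obtain ⟨M, hM⟩ := isCompact_Icc.exists_bound_of_continuousOn hA
  have hsub : Set.Ioc a t ⊆ Set.Icc a b := fun s hs => ⟨hs.1.le, hs.2.trans ht.2⟩
  have hL2 := (Lp.tendsto_Lp_iff_tendsto_eLpNorm' _ _).1 hx
  set c : ℝ≥0∞ := volume.restrict (Set.Icc a b) Set.univ ^
    (1 / (1 : ℝ≥0∞).toReal - 1 / (2 : ℝ≥0∞).toReal)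
  have hc_top : c ≠ ⊤ := ENNReal.rpow_ne_top_of_nonneg (by norm_num) (measure_ne_top _ _)
  have hL1 : Filter.Tendsto (fun k => eLpNorm ((fun s => A s (x k s)) - fun s => A s (x' s)) 1
      (volume.restrict (Set.Icc a b))) Filter.atTop (nhds 0) := by
    have hlim : Filter.Tendsto
        (fun k => ENNReal.ofReal M *
          (eLpNorm (⇑(x k) - ⇑x') 2 (volume.restrict (Set.Icc a b)) * c)) Filter.atTop (nhds 0) := by
      have h := ENNReal.Tendsto.const_mul (a := ENNReal.ofReal M)
        (ENNReal.Tendsto.mul_const hL2 (Or.inr hc_top)) (Or.inr ENNReal.ofReal_ne_top)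
      simpa using h
    refine tendsto_of_tendsto_of_tendsto_of_le_of_le tendsto_const_nhds hlim
      (fun _ => zero_le) fun k => ?_
    refine (eLpNorm_le_mul_eLpNorm_of_ae_le_mul (g := ⇑(x k) - ⇑x') (c := M) ?_ 1).trans ?_
    · filter_upwards [ae_restrict_mem measurableSet_Icc] with s hs
      have h := (A s).le_of_opNorm_le (hM s hs) (x k s - x' s)
      simpa using h
    · gcongr
      exact eLpNorm_le_eLpNorm_mul_rpow_measure_univ (by norm_num)
        ((Lp.aestronglyMeasurable _).sub (Lp.aestronglyMeasurable _))
  have h := tendsto_setIntegral_of_L1' (fun s => A s (x' s)) (integrable_clm_apply hA x').1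
    (Filter.Eventually.of_forall fun k => integrable_clm_apply hA (x k)) hL1 (Set.Ioc a t)
  simpa only [intervalIntegral.integral_of_le ht.1,
    Measure.restrict_restrict_of_subset hsub] using h

end

/-- Eliminating the derivative: `(x, (y, v))` lies on the graph iff the integrated equation
`F x(t) = v + ∫_{t₀}^t (y + C x)` holds almost everywhere. -/
lemma mem_graphD_iff {m n : ℕ} {t₀ T : ℝ} (hT : t₀ < T)
    {F : Matrix (Fin m) (Fin n) ℝ} {C : ℝ → Matrix (Fin m) (Fin n) ℝ}
    (hC : ContinuousOn (fun t => matVecCLM m n (C t)) (Set.Icc t₀ T))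
    (p : (Lp (EuclideanSpace ℝ (Fin n)) 2 (volume.restrict (Set.Icc t₀ T))) ×
      ((Lp (EuclideanSpace ℝ (Fin m)) 2 (volume.restrict (Set.Icc t₀ T))) ×
        EuclideanSpace ℝ (Fin m))) :
    p ∈ graphD t₀ T F C ↔ ∀ᵐ t ∂(volume.restrict (Set.Icc t₀ T)),
      matVecCLM m n F (p.1 t) = p.2.2 + ((∫ s in t₀..t, p.2.1 s) +
        ∫ s in t₀..t, matVecCLM m n (C s) (p.1 s)) := by
  have hy : Integrable (fun t => p.2.1 t) (volume.restrict (Set.Icc t₀ T)) :=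
    (Lp.memLp p.2.1).integrable (by norm_num)
  have hCx := integrable_clm_apply hC p.1
  have hii : ∀ {f : ℝ → EuclideanSpace ℝ (Fin m)},
      Integrable f (volume.restrict (Set.Icc t₀ T)) → ∀ t ∈ Set.Icc t₀ T,
      IntervalIntegrable f volume t₀ t := fun {f} hf t ht =>
    (intervalIntegrable_iff_integrableOn_Icc_of_le ht.1).2
      (IntegrableOn.mono_set hf (Set.Icc_subset_Icc_right ht.2))
  constructor
  · rintro ⟨g, v, ⟨-, hFx⟩, hv, hg⟩
    rw [ae_restrict_iff' measurableSet_Icc] at hg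
    filter_upwards [hFx, ae_restrict_mem measurableSet_Icc] with t h1 ht
    rw [matVecCLM_apply, h1, hv, ← intervalIntegral.integral_add (hii hy t ht) (hii hCx t ht)]
    congr 1
    refine intervalIntegral.integral_congr_ae ?_
    filter_upwards [hg] with s hs hst
    rw [Set.uIoc_of_le ht.1] at hst
    rw [hs ⟨hst.1.le, hst.2.trans ht.2⟩, matVecCLM_apply]
    abel
  · intro h
    refine ⟨fun t => p.2.1 t + matVecCLM m n (C t) (p.1 t), p.2.2, ⟨?_, ?_⟩, rfl, ?_⟩
    · exact hii (hy.add hCx) T (Set.right_mem_Icc.2 hT.le)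
    · filter_upwards [h, ae_restrict_mem measurableSet_Icc] with t h1 ht
      rw [← matVecCLM_apply, h1, intervalIntegral.integral_add (hii hy t ht) (hii hCx t ht)]
    · exact Filter.Eventually.of_forall fun t => (add_sub_cancel_right _ _).symm

/-- **𝓓 is a closed densely defined operator**: its graph is closed in
`L² × (L² × ℝᵐ)` and its domain `W_F` is dense in `L²`. -/
theorem operatorD_closed_denselyDefined {m n : ℕ}
    (t₀ T : ℝ) (hT : t₀ < T)
    (F : Matrix (Fin m) (Fin n) ℝ) (C : ℝ → Matrix (Fin m) (Fin n) ℝ)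
    (hC : ContinuousOn C (Set.Icc t₀ T)) :
    IsClosed (graphD t₀ T F C) ∧ Dense (WF t₀ T F) := by
  have hC' : ContinuousOn (fun t => matVecCLM m n (C t)) (Set.Icc t₀ T) :=
    (LinearMap.continuous_of_finiteDimensional (matVecCLM m n)).comp_continuousOn hC
  constructor
  · refine IsSeqClosed.isClosed fun p q hp hpq => ?_
    rw [mem_graphD_iff hT hC']
    have hx : Filter.Tendsto (fun k => (p k).1) Filter.atTop (nhds q.1) :=
      (continuous_fst.tendsto q).comp hpq
    have hy : Filter.Tendsto (fun k => (p k).2.1) Filter.atTop (nhds q.2.1) :=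
      ((continuous_fst.comp continuous_snd).tendsto q).comp hpq
    have hv : Filter.Tendsto (fun k => (p k).2.2) Filter.atTop (nhds q.2.2) :=
      ((continuous_snd.comp continuous_snd).tendsto q).comp hpq
    -- The left-hand side converges a.e. along a subsequence, the right-hand side everywhere.
    obtain ⟨φ, hφ, hae⟩ := (tendstoInMeasure_of_tendsto_Lp hx).exists_seq_tendsto_ae
    have hall : ∀ᵐ t ∂(volume.restrict (Set.Icc t₀ T)), ∀ k, _ :=
      ae_all_iff.2 fun k => (mem_graphD_iff hT hC' (p k)).1 (hp k)
    filter_upwards [hae, hall, ae_restrict_mem measurableSet_Icc] with t h1 h2 ht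
    have hyt := tendsto_intervalIntegral_clm_apply
      (A := fun _ => ContinuousLinearMap.id ℝ (EuclideanSpace ℝ (Fin m))) continuousOn_const hy ht
    have hxt := tendsto_intervalIntegral_clm_apply hC' hx ht
    have hR := (hv.add (hyt.add hxt)).comp hφ.tendsto_atTop
    have hL := ((matVecCLM m n F).continuous.tendsto _).comp h1
    refine tendsto_nhds_unique hL (hR.congr fun k => ?_)
    exact (h2 (φ k)).symm
  · refine (Lp.dense_hasCompactSupport_contDiff (F := EuclideanSpace ℝ (Fin n))
      (μ := volume.restrict (Set.Icc t₀ T)) (p := 2) (by norm_num)).mono ?_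
    -- For smooth `f`, the derivative of `F f` is `F f'`, by the fundamental theorem of calculus.
    rintro x ⟨f, hxf, -, hf⟩
    have hcont : Continuous fun t => matVecCLM m n F (deriv f t) :=
      (matVecCLM m n F).continuous.comp (hf.continuous_deriv (by simp))
    refine ⟨fun t => matVecCLM m n F (deriv f t), matVecCLM m n F (f t₀),
      hcont.intervalIntegrable _ _, ?_⟩
    filter_upwards [hxf] with t ht
    rw [ht, ← matVecCLM_apply, intervalIntegral.integral_eq_sub_of_hasDerivAt
      (f := fun t => matVecCLM m n F (f t))
      (fun s _ => (matVecCLM m n F).hasFDerivAt.comp_hasDerivAt s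
        ((hf.differentiable (by simp)) s).hasDerivAt) (hcont.intervalIntegrable _ _)]
    abel
end

section
/- For the uncertain discrete-time descriptor model, the minimax a posteriori error σ̂(ℓ, N) in the direction ℓ ∈ ℝⁿ at time N is finite if and only if Q_N⁺Q_N ℓ = ℓ (equivalently, ℓ ∈ R(Q_N)). -/
/-!
The energy constraint bounds a quadratic cost. Its homogeneous version (zero observations),
minimized over the sequences with prescribed endpoint `x_N = v`, equals `(Q_N v, v)`: the
recursion for `Q_k` is the dynamic programming recursion, whose single step is the completion of
a square (`complete_square`), and `Qmat_spec` carries the induction. In particular `Q_N` is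
symmetric and positive semidefinite.

If `Q_N⁺Q_Nℓ = ℓ`, then `ℓ = Q_N z` for some `z`. Two elements of the a posteriori set differ by
a sequence `d` of homogeneous cost at most `4`, so `(Q_N d_N, d_N) ≤ 4`, and
`2 |(ℓ, d_N)| ≤ (Q_N z, z) + (Q_N d_N, d_N)` is bounded.

Conversely, any `v` in the kernel of `Q_N` is the endpoint of a sequence of zero homogeneous
cost, and the a posteriori set is invariant under translation along it (`cost_add_smul`). So a
finite error forces `(ℓ, v) = 0`. Hence `ℓ` is orthogonal to `ker Q_N`, which contains
`ℓ - Q_N⁺Q_Nℓ`, and the latter vector is zero.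
-/

open Matrix
open scoped ENNReal RealInnerProductSpace

/-- `B` is the Moore–Penrose pseudoinverse of `A`. -/
def IsMoorePenrose {ι κ : Type*} [Fintype ι] [Fintype κ]
    (A : Matrix ι κ ℝ) (B : Matrix κ ι ℝ) : Prop :=
  A * B * A = A ∧ B * A * B = B ∧ (A * B)ᵀ = A * B ∧ (B * A)ᵀ = B * A

/-- The Moore–Penrose pseudoinverse `A⁺` (it exists, and is unique, for every
real matrix). -/
noncomputable def pinv {ι κ : Type*} [Fintype ι] [Fintype κ]
    (A : Matrix ι κ ℝ) : Matrix κ ι ℝ :=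
  haveI := Classical.propDecidable (∃ B, IsMoorePenrose A B)
  if h : ∃ B, IsMoorePenrose A B then h.choose else 0

/-- The recursively defined matrices `Q_k`:
`Q_0 = F₀'SF₀ + H₀'R₀H₀`,
`Q_{k+1} = H_{k+1}'R_{k+1}H_{k+1} + F_{k+1}'[S_k − S_kC_kP_k⁺C_k'S_k]F_{k+1}`,
with `P_k = Q_k + C_k'S_kC_k`. -/
noncomputable def Qmat {m n p : ℕ} (F C : ℕ → Matrix (Fin m) (Fin n) ℝ)
    (Hm : ℕ → Matrix (Fin p) (Fin n) ℝ) (S0 : Matrix (Fin m) (Fin m) ℝ)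
    (S : ℕ → Matrix (Fin m) (Fin m) ℝ) (R : ℕ → Matrix (Fin p) (Fin p) ℝ) :
    ℕ → Matrix (Fin n) (Fin n) ℝ
  | 0 => (F 0)ᵀ * S0 * F 0 + (Hm 0)ᵀ * R 0 * Hm 0
  | (k+1) => (Hm (k+1))ᵀ * R (k+1) * Hm (k+1) +
      (F (k+1))ᵀ * (S k - S k * C k *
          pinv (Qmat F C Hm S0 S R k + (C k)ᵀ * S k * C k) * (C k)ᵀ * S k) *
        F (k+1)

/-- The matrices `P_k = Q_k + C_k'S_kC_k`. -/
noncomputable def Pmat {m n p : ℕ} (F C : ℕ → Matrix (Fin m) (Fin n) ℝ)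
    (Hm : ℕ → Matrix (Fin p) (Fin n) ℝ) (S0 : Matrix (Fin m) (Fin m) ℝ)
    (S : ℕ → Matrix (Fin m) (Fin m) ℝ) (R : ℕ → Matrix (Fin p) (Fin p) ℝ)
    (k : ℕ) : Matrix (Fin n) (Fin n) ℝ :=
  Qmat F C Hm S0 S R k + (C k)ᵀ * S k * C k

/-- The recursively defined vectors `r_k`:
`r_0 = H₀'R₀y₀`, `r_{k+1} = F_{k+1}'S_kC_kP_k⁺ r_k + H_{k+1}'R_{k+1}y_{k+1}`. -/
noncomputable def rvec {m n p : ℕ} (F C : ℕ → Matrix (Fin m) (Fin n) ℝ)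
    (Hm : ℕ → Matrix (Fin p) (Fin n) ℝ) (S0 : Matrix (Fin m) (Fin m) ℝ)
    (S : ℕ → Matrix (Fin m) (Fin m) ℝ) (R : ℕ → Matrix (Fin p) (Fin p) ℝ)
    (y : ℕ → EuclideanSpace ℝ (Fin p)) :
    ℕ → EuclideanSpace ℝ (Fin n)
  | 0 => matVec ((Hm 0)ᵀ * R 0) (y 0)
  | (k+1) => matVec ((F (k+1))ᵀ * S k * C k * pinv (Pmat F C Hm S0 S R k))
        (rvec F C Hm S0 S R y k) +
      matVec ((Hm (k+1))ᵀ * R (k+1)) (y (k+1))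

/-- The recursively defined numbers `α_k`:
`α_0 = (R₀y₀, y₀)`,
`α_{k+1} = α_k + (R_{k+1}y_{k+1}, y_{k+1}) − (P_k⁺ r_k, r_k)`. -/
noncomputable def alphaNum {m n p : ℕ} (F C : ℕ → Matrix (Fin m) (Fin n) ℝ)
    (Hm : ℕ → Matrix (Fin p) (Fin n) ℝ) (S0 : Matrix (Fin m) (Fin m) ℝ)
    (S : ℕ → Matrix (Fin m) (Fin m) ℝ) (R : ℕ → Matrix (Fin p) (Fin p) ℝ)
    (y : ℕ → EuclideanSpace ℝ (Fin p)) : ℕ → ℝ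
  | 0 => ⟪matVec (R 0) (y 0), y 0⟫
  | (k+1) => alphaNum F C Hm S0 S R y k +
      ⟪matVec (R (k+1)) (y (k+1)), y (k+1)⟫ -
      ⟪matVec (pinv (Pmat F C Hm S0 S R k)) (rvec F C Hm S0 S R y k),
        rvec F C Hm S0 S R y k⟫

/-- The a posteriori set `𝓖_y`: sequences `(x_0, …, x_N)` consistent with the
model `F_{k+1}x_{k+1} − C_kx_k = f_k`, `F₀x₀ = q`, `y_k = H_kx_k + g_k` and the
constraint `(Sq,q) + Σ_{i<N}(S_if_i,f_i) + Σ_{i≤N}(R_ig_i,g_i) ≤ 1`. -/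
def GySeq {m n p : ℕ} (F C : ℕ → Matrix (Fin m) (Fin n) ℝ)
    (Hm : ℕ → Matrix (Fin p) (Fin n) ℝ) (S0 : Matrix (Fin m) (Fin m) ℝ)
    (S : ℕ → Matrix (Fin m) (Fin m) ℝ) (R : ℕ → Matrix (Fin p) (Fin p) ℝ)
    (y : ℕ → EuclideanSpace ℝ (Fin p)) (N : ℕ) :
    Set (ℕ → EuclideanSpace ℝ (Fin n)) :=
  {x | ⟪matVec S0 (matVec (F 0) (x 0)), matVec (F 0) (x 0)⟫ +
      (∑ i ∈ Finset.range N,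
        ⟪matVec (S i) (matVec (F (i+1)) (x (i+1)) - matVec (C i) (x i)),
          matVec (F (i+1)) (x (i+1)) - matVec (C i) (x i)⟫) +
      (∑ i ∈ Finset.range (N+1),
        ⟪matVec (R i) (y i - matVec (Hm i) (x i)),
          y i - matVec (Hm i) (x i)⟫) ≤ 1}

/-- The minimax a posteriori error
`σ̂(ℓ, N) = inf_a sup_{x ∈ 𝓖_y} |(ℓ, x_N) − a|`. -/
noncomputable def sigmaHatSeq {m n p : ℕ} (F C : ℕ → Matrix (Fin m) (Fin n) ℝ)
    (Hm : ℕ → Matrix (Fin p) (Fin n) ℝ) (S0 : Matrix (Fin m) (Fin m) ℝ)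
    (S : ℕ → Matrix (Fin m) (Fin m) ℝ) (R : ℕ → Matrix (Fin p) (Fin p) ℝ)
    (y : ℕ → EuclideanSpace ℝ (Fin p)) (N : ℕ)
    (ℓ : EuclideanSpace ℝ (Fin n)) : ℝ≥0∞ :=
  ⨅ (a : ℝ), ⨆ (x : ℕ → EuclideanSpace ℝ (Fin n))
      (_ : x ∈ GySeq F C Hm S0 S R y N),
    ENNReal.ofReal |⟪ℓ, x N⟫ - a|

/-!
**Theorem 4 (finiteness):** for the uncertain discrete-time descriptor model,
the minimax a posteriori error `σ̂(ℓ, N)` is finite iff `Q_N⁺ Q_N ℓ = ℓ`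
(equivalently `ℓ ∈ R(Q_N)`).
-/

/-! ### Pseudoinverses of symmetric matrices -/

/-- Diagonalize `A = U D Uᵀ` and invert the nonzero eigenvalues; the convention `0⁻¹ = 0`
makes `U D⁻¹ Uᵀ` the Moore–Penrose pseudoinverse. -/
theorem exists_isMoorePenrose {ι : Type*} [Fintype ι] [DecidableEq ι] {A : Matrix ι ι ℝ}
    (hA : Aᵀ = A) : ∃ B, IsMoorePenrose A B := by
  have hA' : A.IsHermitian := by simpa [Matrix.IsHermitian] using hA
  obtain ⟨U, V, d, hVU, hUV, hV, hAd⟩ : ∃ (U V : Matrix ι ι ℝ) (d : ι → ℝ),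
      V * U = 1 ∧ U * V = 1 ∧ V = Uᵀ ∧ A = U * diagonal d * V := by
    refine ⟨hA'.eigenvectorUnitary, star (hA'.eigenvectorUnitary : Matrix ι ι ℝ),
      hA'.eigenvalues, ?_, ?_, ?_, ?_⟩
    · exact Unitary.coe_star_mul_self _
    · exact Unitary.coe_mul_star_self _
    · rw [star_eq_conjTranspose, conjTranspose_eq_transpose_of_trivial]
    · have := hA'.spectral_theorem
      rw [Unitary.conjStarAlgAut_apply] at this
      exact this
  have key : ∀ e f : ι → ℝ, U * diagonal e * V * (U * diagonal f * V) =
      U * diagonal (fun i => e i * f i) * V := by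
    intro e f
    rw [← diagonal_mul_diagonal]
    calc _ = U * diagonal e * (V * U) * diagonal f * V := by simp only [Matrix.mul_assoc]
      _ = _ := by rw [hVU]; simp only [Matrix.mul_assoc, Matrix.one_mul]
  have ht : ∀ e : ι → ℝ, (U * diagonal e * V)ᵀ = U * diagonal e * V := by
    intro e
    rw [hV]
    simp only [transpose_mul, transpose_transpose, diagonal_transpose, Matrix.mul_assoc]
  refine ⟨U * diagonal (fun i => (d i)⁻¹) * V, ?_, ?_, ?_, ?_⟩
  · rw [hAd, key, key]; simp
  · rw [hAd, key, key]
    congr 3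
    funext i
    by_cases h : d i = 0 <;> simp [h]
  · rw [hAd, key, ht]
  · rw [hAd, key, ht]

theorem pinv_spec {ι : Type*} [Fintype ι] [DecidableEq ι] {A : Matrix ι ι ℝ}
    (hA : Aᵀ = A) : IsMoorePenrose A (pinv A) := by
  have h := exists_isMoorePenrose hA
  unfold pinv
  rw [dif_pos h]
  exact h.choose_spec

/-! ### Matrices acting on Euclidean vectors and their quadratic forms -/

theorem posDef_transpose {κ : Type*} {A : Matrix κ κ ℝ} (hA : A.PosDef) : Aᵀ = A := by
  simpa [Matrix.IsHermitian] using hA.isHermitian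

section MatVec

variable {ι κ μ : Type*} [Fintype ι] [Fintype κ] [Fintype μ] [DecidableEq κ] [DecidableEq μ]

theorem matVec_mul (A : Matrix ι κ ℝ) (B : Matrix κ μ ℝ) (v : EuclideanSpace ℝ μ) :
    matVec (A * B) v = matVec A (matVec B v) := by
  simp [matVec, Matrix.toLpLin_apply]

theorem matVec_add_mat (A B : Matrix ι κ ℝ) (v : EuclideanSpace ℝ κ) :
    matVec (A + B) v = matVec A v + matVec B v := by
  simp [matVec]

theorem matVec_sub_mat (A B : Matrix ι κ ℝ) (v : EuclideanSpace ℝ κ) :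
    matVec (A - B) v = matVec A v - matVec B v := by
  simp [matVec]

theorem matVec_add (A : Matrix ι κ ℝ) (u v : EuclideanSpace ℝ κ) :
    matVec A (u + v) = matVec A u + matVec A v := by
  simp [matVec]

theorem matVec_sub (A : Matrix ι κ ℝ) (u v : EuclideanSpace ℝ κ) :
    matVec A (u - v) = matVec A u - matVec A v := by
  simp [matVec]

theorem matVec_smul (A : Matrix ι κ ℝ) (t : ℝ) (v : EuclideanSpace ℝ κ) :
    matVec A (t • v) = t • matVec A v := by
  simp [matVec]

theorem matVec_zero (A : Matrix ι κ ℝ) : matVec A 0 = 0 := by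
  simp [matVec]

theorem matVec_injective {A B : Matrix ι κ ℝ} (h : ∀ v, matVec A v = matVec B v) : A = B :=
  (Matrix.toEuclideanLin (𝕜 := ℝ)).injective (LinearMap.ext h)

theorem inner_matVec_left [DecidableEq ι] (A : Matrix ι κ ℝ) (u : EuclideanSpace ℝ κ) (v : EuclideanSpace ℝ ι) :
    ⟪matVec A u, v⟫ = ⟪u, matVec Aᵀ v⟫ := by
  have h : ∀ (a b : EuclideanSpace ℝ κ), ⟪a, b⟫ = b.ofLp ⬝ᵥ a.ofLp := fun _ _ => rfl
  have h' : ∀ (a b : EuclideanSpace ℝ ι), ⟪a, b⟫ = b.ofLp ⬝ᵥ a.ofLp := fun _ _ => rfl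
  rw [h, h']
  simp only [matVec, Matrix.toLpLin_apply]
  rw [Matrix.dotProduct_mulVec, Matrix.mulVec_transpose]

theorem inner_matVec_symm {A : Matrix κ κ ℝ} (hA : Aᵀ = A) (u v : EuclideanSpace ℝ κ) :
    ⟪matVec A u, v⟫ = ⟪matVec A v, u⟫ := by
  rw [inner_matVec_left, hA, real_inner_comm]

theorem posDef_inner_pos {A : Matrix κ κ ℝ} (hA : A.PosDef) {v : EuclideanSpace ℝ κ}
    (hv : v ≠ 0) : 0 < ⟪matVec A v, v⟫ := by
  have h := hA.dotProduct_mulVec_pos (x := v.ofLp) (by simpa using hv)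
  simpa [matVec, EuclideanSpace.inner_eq_star_dotProduct, Matrix.toLpLin_apply] using h

theorem posDef_inner_nonneg {A : Matrix κ κ ℝ} (hA : A.PosDef) (v : EuclideanSpace ℝ κ) :
    0 ≤ ⟪matVec A v, v⟫ := by
  by_cases hv : v = 0
  · simp [hv]
  · exact (posDef_inner_pos hA hv).le

theorem posDef_inner_eq_zero {A : Matrix κ κ ℝ} (hA : A.PosDef) {v : EuclideanSpace ℝ κ}
    (h : ⟪matVec A v, v⟫ = 0) : v = 0 := by
  by_contra hv
  exact (posDef_inner_pos hA hv).ne' h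

theorem inner_sub_le {A : Matrix κ κ ℝ} (h0 : ∀ v, 0 ≤ ⟪matVec A v, v⟫)
    (u v : EuclideanSpace ℝ κ) :
    ⟪matVec A (u - v), u - v⟫ ≤ 2 * ⟪matVec A u, u⟫ + 2 * ⟪matVec A v, v⟫ := by
  have h := h0 (u + v)
  simp only [matVec_sub, matVec_add, inner_sub_left, inner_sub_right, inner_add_left,
    inner_add_right] at h ⊢
  linarith

theorem two_mul_abs_inner_le {A : Matrix κ κ ℝ} (hA : Aᵀ = A) (h0 : ∀ v, 0 ≤ ⟪matVec A v, v⟫)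
    (u v : EuclideanSpace ℝ κ) :
    2 * |⟪matVec A u, v⟫| ≤ ⟪matVec A u, u⟫ + ⟪matVec A v, v⟫ := by
  have h1 := h0 (u + v)
  have h2 := h0 (u - v)
  have hs := inner_matVec_symm hA v u
  simp only [matVec_sub, matVec_add, inner_sub_left, inner_sub_right, inner_add_left,
    inner_add_right] at h1 h2
  rcases abs_cases ⟪matVec A u, v⟫ with ⟨h, -⟩ | ⟨h, -⟩ <;> rw [h] <;> linarith

end MatVec

/-! ### Minimizing over one step -/

section Step

variable {m n : ℕ} {Q B : Matrix (Fin n) (Fin n) ℝ} {C : Matrix (Fin m) (Fin n) ℝ}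
  {S : Matrix (Fin m) (Fin m) ℝ}

/-- With `P = Q + CᵀSC`, the range of `Cᵀ` lies in the range of `P`, on which `P * B` is the
identity. The reason is `ker P ⊆ ker C`: if `P u = 0`, then both nonnegative terms of
`(P u, u) = (Q u, u) + (S C u, C u)` vanish. -/
theorem mul_pinv_mul_transpose (hQ : Qᵀ = Q) (hQ0 : ∀ v, 0 ≤ ⟪matVec Q v, v⟫) (hS : S.PosDef)
    (hB : IsMoorePenrose (Q + Cᵀ * S * C) B) : (Q + Cᵀ * S * C) * B * Cᵀ = Cᵀ := by
  set P := Q + Cᵀ * S * C with hP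
  obtain ⟨h1, h2, h3, h4⟩ := hB
  have hPt : Pᵀ = P := by
    simp [hP, hQ, posDef_transpose hS, Matrix.mul_assoc]
  have hker : ∀ u, matVec P u = 0 → matVec C u = 0 := by
    intro u hu
    have h : ⟪matVec Q u, u⟫ + ⟪matVec S (matVec C u), matVec C u⟫ = 0 := by
      have : ⟪matVec P u, u⟫ = 0 := by rw [hu, inner_zero_left]
      rw [hP, matVec_add_mat, inner_add_left, matVec_mul, matVec_mul, inner_matVec_left Cᵀ,
        transpose_transpose] at this
      exact this
    exact posDef_inner_eq_zero hS
      (by linarith [hQ0 u, posDef_inner_nonneg hS (matVec C u)])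
  have hC : C * (B * P) = C := by
    refine matVec_injective fun v => ?_
    have hz : matVec C (v - matVec (B * P) v) = 0 := by
      apply hker
      rw [matVec_sub, ← matVec_mul, ← Matrix.mul_assoc, h1, sub_self]
    rw [matVec_sub, sub_eq_zero] at hz
    rw [matVec_mul, ← hz]
  have hC' : P * Bᵀ * Cᵀ = Cᵀ := by
    have := congrArg Matrix.transpose hC
    simpa [hPt, Matrix.mul_assoc] using this
  calc P * B * Cᵀ = P * B * (P * Bᵀ * Cᵀ) := by rw [hC']
    _ = (P * B * P) * Bᵀ * Cᵀ := by simp only [Matrix.mul_assoc]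
    _ = Cᵀ := by rw [h1, hC']

theorem schur_transpose (hQ : Qᵀ = Q) (hQ0 : ∀ v, 0 ≤ ⟪matVec Q v, v⟫) (hS : S.PosDef)
    (hB : IsMoorePenrose (Q + Cᵀ * S * C) B) :
    (S - S * C * B * Cᵀ * S)ᵀ = S - S * C * B * Cᵀ * S := by
  have hS' := posDef_transpose hS
  have h := mul_pinv_mul_transpose hQ hQ0 hS hB
  have hPt : (Q + Cᵀ * S * C)ᵀ = Q + Cᵀ * S * C := by
    simp [hQ, hS', Matrix.mul_assoc]
  have hC : C * Bᵀ * (Q + Cᵀ * S * C) = C := by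
    have := congrArg Matrix.transpose h
    rwa [transpose_mul, transpose_mul, hPt, transpose_transpose, ← Matrix.mul_assoc] at this
  have hE : C * B * Cᵀ = C * Bᵀ * (Q + Cᵀ * S * C) * (B * Cᵀ) := by
    rw [hC, Matrix.mul_assoc]
  have hEt : (C * B * Cᵀ)ᵀ = C * B * Cᵀ := by
    rw [hE, transpose_mul, transpose_mul _ (Q + _), hPt]
    simp only [transpose_mul, transpose_transpose, Matrix.mul_assoc]
  have : S * C * B * Cᵀ * S = S * (C * B * Cᵀ) * S := by simp only [Matrix.mul_assoc]
  rw [this, transpose_sub, transpose_mul, transpose_mul, hEt, hS',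
    ← Matrix.mul_assoc S (C * B * Cᵀ)]

/-- Completing the square in `u`: the minimum over `u` of `(Q u, u) + (S (w - C u), w - C u)` is
the Schur-complement form in `w`, attained at `u = B Cᵀ S w`. -/
theorem complete_square (hQ : Qᵀ = Q) (hQ0 : ∀ v, 0 ≤ ⟪matVec Q v, v⟫) (hS : S.PosDef)
    (hB : IsMoorePenrose (Q + Cᵀ * S * C) B) (u : EuclideanSpace ℝ (Fin n))
    (w : EuclideanSpace ℝ (Fin m)) :
    ⟪matVec Q u, u⟫ + ⟪matVec S (w - matVec C u), w - matVec C u⟫ =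
      ⟪matVec (S - S * C * B * Cᵀ * S) w, w⟫ +
        ⟪matVec (Q + Cᵀ * S * C) (u - matVec (B * Cᵀ * S) w), u - matVec (B * Cᵀ * S) w⟫ := by
  have hS' := posDef_transpose hS
  have h := mul_pinv_mul_transpose hQ hQ0 hS hB
  have hPt : (Q + Cᵀ * S * C)ᵀ = Q + Cᵀ * S * C := by
    simp [hQ, hS', Matrix.mul_assoc]
  have hP : ∀ v, ⟪matVec (Q + Cᵀ * S * C) v, v⟫ =
      ⟪matVec Q v, v⟫ + ⟪matVec S (matVec C v), matVec C v⟫ := by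
    intro v
    rw [matVec_add_mat, inner_add_left, matVec_mul, matVec_mul, inner_matVec_left Cᵀ,
      transpose_transpose]
  set z := matVec (B * Cᵀ * S) w with hz
  have hPz : matVec (Q + Cᵀ * S * C) z = matVec Cᵀ (matVec S w) := by
    rw [hz, ← matVec_mul, ← matVec_mul]
    congr 1
    rw [← Matrix.mul_assoc, ← Matrix.mul_assoc, h]
  have hSz : matVec (S * C * B * Cᵀ * S) w = matVec S (matVec C z) := by
    rw [hz, ← matVec_mul, ← matVec_mul]
    simp only [Matrix.mul_assoc]
  have e1 : ⟪matVec (Q + Cᵀ * S * C) z, u⟫ = ⟪matVec S w, matVec C u⟫ := by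
    rw [hPz, inner_matVec_left, transpose_transpose]
  have e2 : ⟪matVec (Q + Cᵀ * S * C) z, z⟫ = ⟪matVec S w, matVec C z⟫ := by
    rw [hPz, inner_matVec_left, transpose_transpose]
  have e3 := inner_matVec_symm hPt u z
  have e4 := inner_matVec_symm hS' (matVec C u) w
  have e5 := inner_matVec_symm hS' (matVec C z) w
  have e6 := hP u
  rw [matVec_sub_mat, hSz]
  simp only [matVec_sub, inner_sub_left, inner_sub_right]
  linarith

end Step

/-! ### The cost functional and its value function -/

section Cost

variable {m n p : ℕ}

/-- The left-hand side of the energy constraint for a sequence `x` and observations `y`. -/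
noncomputable def cost (F C : ℕ → Matrix (Fin m) (Fin n) ℝ)
    (Hm : ℕ → Matrix (Fin p) (Fin n) ℝ) (S0 : Matrix (Fin m) (Fin m) ℝ)
    (S : ℕ → Matrix (Fin m) (Fin m) ℝ) (R : ℕ → Matrix (Fin p) (Fin p) ℝ)
    (y : ℕ → EuclideanSpace ℝ (Fin p)) (N : ℕ) (x : ℕ → EuclideanSpace ℝ (Fin n)) : ℝ :=
  ⟪matVec S0 (matVec (F 0) (x 0)), matVec (F 0) (x 0)⟫ +
      (∑ i ∈ Finset.range N,
        ⟪matVec (S i) (matVec (F (i+1)) (x (i+1)) - matVec (C i) (x i)),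
          matVec (F (i+1)) (x (i+1)) - matVec (C i) (x i)⟫) +
      (∑ i ∈ Finset.range (N+1),
        ⟪matVec (R i) (y i - matVec (Hm i) (x i)),
          y i - matVec (Hm i) (x i)⟫)

variable {F C : ℕ → Matrix (Fin m) (Fin n) ℝ}
    {Hm : ℕ → Matrix (Fin p) (Fin n) ℝ} {S0 : Matrix (Fin m) (Fin m) ℝ}
    {S : ℕ → Matrix (Fin m) (Fin m) ℝ} {R : ℕ → Matrix (Fin p) (Fin p) ℝ}
    {y : ℕ → EuclideanSpace ℝ (Fin p)}

theorem cost_succ (N : ℕ) (x : ℕ → EuclideanSpace ℝ (Fin n)) :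
    cost F C Hm S0 S R y (N + 1) x = cost F C Hm S0 S R y N x +
      ⟪matVec (S N) (matVec (F (N+1)) (x (N+1)) - matVec (C N) (x N)),
          matVec (F (N+1)) (x (N+1)) - matVec (C N) (x N)⟫ +
      ⟪matVec (R (N+1)) (y (N+1) - matVec (Hm (N+1)) (x (N+1))),
          y (N+1) - matVec (Hm (N+1)) (x (N+1))⟫ := by
  unfold cost
  rw [Finset.sum_range_succ _ (N + 1), Finset.sum_range_succ _ N]
  ring

theorem cost_congr {N : ℕ} {x x' : ℕ → EuclideanSpace ℝ (Fin n)} (h : ∀ i ≤ N, x i = x' i) :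
    cost F C Hm S0 S R y N x = cost F C Hm S0 S R y N x' := by
  induction N with
  | zero => simp [cost, h 0 le_rfl]
  | succ N ih =>
    rw [cost_succ, cost_succ, ih fun i hi => h i (by omega), h (N + 1) le_rfl, h N (by omega)]

theorem cost_nonneg (hS0 : S0.PosDef) (hS : ∀ k, (S k).PosDef) (hR : ∀ k, (R k).PosDef)
    (N : ℕ) (x : ℕ → EuclideanSpace ℝ (Fin n)) : 0 ≤ cost F C Hm S0 S R y N x :=
  add_nonneg (add_nonneg (posDef_inner_nonneg hS0 _)
    (Finset.sum_nonneg fun i _ => posDef_inner_nonneg (hS i) _))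
    (Finset.sum_nonneg fun i _ => posDef_inner_nonneg (hR i) _)

/-- The difference of two sequences explains the zero observations, with cost controlled by the
parallelogram inequality in each term. -/
theorem cost_sub_le (hS0 : S0.PosDef) (hS : ∀ k, (S k).PosDef) (hR : ∀ k, (R k).PosDef)
    (N : ℕ) (x x' : ℕ → EuclideanSpace ℝ (Fin n)) :
    cost F C Hm S0 S R 0 N (x - x') ≤
      2 * cost F C Hm S0 S R y N x + 2 * cost F C Hm S0 S R y N x' := by
  have hr : ∀ i, ⟪matVec (R i) ((0 : ℕ → EuclideanSpace ℝ (Fin p)) i -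
        matVec (Hm i) ((x - x') i)), (0 : ℕ → EuclideanSpace ℝ (Fin p)) i -
        matVec (Hm i) ((x - x') i)⟫ ≤
      2 * ⟪matVec (R i) (y i - matVec (Hm i) (x i)), y i - matVec (Hm i) (x i)⟫ +
      2 * ⟪matVec (R i) (y i - matVec (Hm i) (x' i)), y i - matVec (Hm i) (x' i)⟫ := by
    intro i
    have e : (0 : ℕ → EuclideanSpace ℝ (Fin p)) i - matVec (Hm i) ((x - x') i) =
        (y i - matVec (Hm i) (x i)) - (y i - matVec (Hm i) (x' i)) := by
      simp only [Pi.zero_apply, Pi.sub_apply, matVec_sub]; abel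
    rw [e]
    exact inner_sub_le (posDef_inner_nonneg (hR i)) _ _
  induction N with
  | zero =>
    have h1 := inner_sub_le (posDef_inner_nonneg hS0) (matVec (F 0) (x 0)) (matVec (F 0) (x' 0))
    have h2 := hr 0
    rw [← matVec_sub] at h1
    simp only [cost, Finset.range_zero, Finset.sum_empty, zero_add, Finset.sum_range_one]
    rw [Pi.sub_apply] at *
    linarith
  | succ N ih =>
    have h1 := inner_sub_le (posDef_inner_nonneg (hS N))
      (matVec (F (N+1)) (x (N+1)) - matVec (C N) (x N))
      (matVec (F (N+1)) (x' (N+1)) - matVec (C N) (x' N))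
    have e : matVec (F (N+1)) (x (N+1)) - matVec (C N) (x N) -
        (matVec (F (N+1)) (x' (N+1)) - matVec (C N) (x' N)) =
        matVec (F (N+1)) ((x - x') (N+1)) - matVec (C N) ((x - x') N) := by
      simp only [Pi.sub_apply, matVec_sub]; abel
    rw [e] at h1
    have h2 := hr (N + 1)
    rw [cost_succ, cost_succ, cost_succ]
    linarith

/-- Every term of the homogeneous cost is a positive definite form, so a sequence of zero
homogeneous cost has all residuals zero and moving along it changes no residual. -/
theorem cost_add_smul (hS0 : S0.PosDef) (hS : ∀ k, (S k).PosDef) (hR : ∀ k, (R k).PosDef)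
    (N : ℕ) (x d : ℕ → EuclideanSpace ℝ (Fin n)) (hd : cost F C Hm S0 S R 0 N d = 0) (t : ℝ) :
    cost F C Hm S0 S R y N (x + t • d) = cost F C Hm S0 S R y N x := by
  have hr : ∀ i, ⟪matVec (R i) ((0 : ℕ → EuclideanSpace ℝ (Fin p)) i - matVec (Hm i) (d i)),
      (0 : ℕ → EuclideanSpace ℝ (Fin p)) i - matVec (Hm i) (d i)⟫ = 0 →
      y i - matVec (Hm i) ((x + t • d) i) = y i - matVec (Hm i) (x i) := by
    intro i hi
    have := posDef_inner_eq_zero (hR i) hi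
    rw [Pi.zero_apply, zero_sub, neg_eq_zero] at this
    rw [Pi.add_apply, Pi.smul_apply, matVec_add, matVec_smul, this, smul_zero, add_zero]
  induction N with
  | zero =>
    simp only [cost, Finset.range_zero, Finset.sum_empty, zero_add, add_zero,
      Finset.sum_range_one] at hd ⊢
    have h1 := posDef_inner_nonneg hS0 (matVec (F 0) (d 0))
    have h2 := posDef_inner_nonneg (hR 0)
      ((0 : ℕ → EuclideanSpace ℝ (Fin p)) 0 - matVec (Hm 0) (d 0))
    have h3 := posDef_inner_eq_zero hS0 (v := matVec (F 0) (d 0)) (by linarith)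
    rw [hr 0 (by linarith), Pi.add_apply, Pi.smul_apply, matVec_add, matVec_smul, h3, smul_zero,
      add_zero]
  | succ N ih =>
    rw [cost_succ] at hd
    have h0 := cost_nonneg (F := F) (C := C) (Hm := Hm) (y := 0) hS0 hS hR N d
    have h1 := posDef_inner_nonneg (hS N) (matVec (F (N+1)) (d (N+1)) - matVec (C N) (d N))
    have h2 := posDef_inner_nonneg (hR (N+1))
      ((0 : ℕ → EuclideanSpace ℝ (Fin p)) (N+1) - matVec (Hm (N+1)) (d (N+1)))
    have h3 := posDef_inner_eq_zero (hS N) (v := matVec (F (N+1)) (d (N+1)) - matVec (C N) (d N))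
      (by linarith)
    have e : matVec (F (N+1)) ((x + t • d) (N+1)) - matVec (C N) ((x + t • d) N) =
        matVec (F (N+1)) (x (N+1)) - matVec (C N) (x N) := by
      have : matVec (F (N+1)) ((x + t • d) (N+1)) - matVec (C N) ((x + t • d) N) =
          matVec (F (N+1)) (x (N+1)) - matVec (C N) (x N) +
            t • (matVec (F (N+1)) (d (N+1)) - matVec (C N) (d N)) := by
        simp only [Pi.add_apply, Pi.smul_apply, matVec_add, matVec_smul, smul_sub]; abel
      rw [this, h3, smul_zero, add_zero]
    rw [cost_succ, cost_succ, hr (N+1) (by linarith), e, ih (by linarith)]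

/-- The form of `Q_N` is the value function of the homogeneous problem: `(Q_N v, v)` is the
minimum of the cost with zero observations over the sequences ending at `x_N = v`. This is
dynamic programming, one application of `complete_square` per step. -/
theorem Qmat_spec (hS0 : S0.PosDef) (hS : ∀ k, (S k).PosDef) (hR : ∀ k, (R k).PosDef) (N : ℕ) :
    (Qmat F C Hm S0 S R N)ᵀ = Qmat F C Hm S0 S R N ∧
    (∀ x, ⟪matVec (Qmat F C Hm S0 S R N) (x N), x N⟫ ≤ cost F C Hm S0 S R 0 N x) ∧
    (∀ v, ∃ x, x N = v ∧
      cost F C Hm S0 S R 0 N x = ⟪matVec (Qmat F C Hm S0 S R N) v, v⟫) := by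
  have hconj : ∀ {k l : ℕ} (A : Matrix (Fin k) (Fin l) ℝ) (M : Matrix (Fin k) (Fin k) ℝ) (v),
      ⟪matVec (Aᵀ * M * A) v, v⟫ = ⟪matVec M (matVec A v), matVec A v⟫ := by
    intro k l A M v
    rw [matVec_mul, matVec_mul, inner_matVec_left Aᵀ, transpose_transpose]
  have hneg : ∀ (i : ℕ) (v : EuclideanSpace ℝ (Fin n)),
      ⟪matVec (R i) ((0 : ℕ → EuclideanSpace ℝ (Fin p)) i - matVec (Hm i) v),
        (0 : ℕ → EuclideanSpace ℝ (Fin p)) i - matVec (Hm i) v⟫ =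
      ⟪matVec ((Hm i)ᵀ * R i * Hm i) v, v⟫ := by
    intro i v
    rw [hconj, Pi.zero_apply, matVec_sub, matVec_zero, zero_sub, zero_sub, inner_neg_neg]
  induction N with
  | zero =>
    have hc : ∀ x, cost F C Hm S0 S R 0 0 x =
        ⟪matVec (Qmat F C Hm S0 S R 0) (x 0), x 0⟫ := by
      intro x
      rw [Qmat, matVec_add_mat, inner_add_left, ← hneg, hconj]
      simp [cost]
    refine ⟨?_, fun x => (hc x).ge, fun v => ⟨fun _ => v, rfl, hc _⟩⟩
    simp [Qmat, posDef_transpose hS0, posDef_transpose (hR 0), Matrix.mul_assoc]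
  | succ N ih =>
    obtain ⟨hQ, hle, hex⟩ := ih
    have hQ0 : ∀ v, 0 ≤ ⟪matVec (Qmat F C Hm S0 S R N) v, v⟫ := by
      intro v
      obtain ⟨x, -, hx⟩ := hex v
      exact hx ▸ cost_nonneg hS0 hS hR N x
    set Q := Qmat F C Hm S0 S R N with hQdef
    have hPt : (Q + (C N)ᵀ * S N * C N)ᵀ = Q + (C N)ᵀ * S N * C N := by
      simp [hQ, posDef_transpose (hS N), Matrix.mul_assoc]
    have hB := pinv_spec hPt
    have hP0 : ∀ v, 0 ≤ ⟪matVec (Q + (C N)ᵀ * S N * C N) v, v⟫ := by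
      intro v
      rw [matVec_add_mat, inner_add_left, hconj]
      exact add_nonneg (hQ0 v) (posDef_inner_nonneg (hS N) _)
    have hsq := complete_square hQ hQ0 (hS N) hB
    have hform : ∀ v, ⟪matVec (Qmat F C Hm S0 S R (N+1)) v, v⟫ =
        ⟪matVec ((Hm (N+1))ᵀ * R (N+1) * Hm (N+1)) v, v⟫ +
        ⟪matVec (S N - S N * C N * pinv (Q + (C N)ᵀ * S N * C N) * (C N)ᵀ * S N)
          (matVec (F (N+1)) v), matVec (F (N+1)) v⟫ := by
      intro v
      rw [Qmat, matVec_add_mat, inner_add_left, hconj (F (N+1))]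
    refine ⟨?_, ?_, ?_⟩
    · have h := schur_transpose hQ hQ0 (hS N) hB
      rw [Qmat, ← hQdef, transpose_add, transpose_mul, transpose_mul _ (F (N+1)),
        transpose_mul _ (S N - _), h]
      simp only [transpose_mul, transpose_transpose, posDef_transpose (hR (N+1)),
        Matrix.mul_assoc]
    · intro x
      have h1 := hsq (x N) (matVec (F (N+1)) (x (N+1)))
      have h2 := hP0 (x N - matVec (pinv (Q + (C N)ᵀ * S N * C N) * (C N)ᵀ * S N)
        (matVec (F (N+1)) (x (N+1))))
      have h3 := hle x
      rw [cost_succ, hneg, hform]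
      linarith
    · intro v
      obtain ⟨x, hxN, hx⟩ := hex (matVec (pinv (Q + (C N)ᵀ * S N * C N) * (C N)ᵀ * S N)
        (matVec (F (N+1)) v))
      refine ⟨Function.update x (N+1) v, by simp, ?_⟩
      have h1 := hsq (x N) (matVec (F (N+1)) v)
      rw [hxN, sub_self, matVec_zero, inner_zero_left] at h1
      rw [cost_succ, hneg, hform, cost_congr (x' := x) fun i hi =>
        Function.update_of_ne (by omega) _ _, Function.update_self,
        Function.update_of_ne (by omega), hx, hxN]
      linarith

end Cost

/-- **Theorem 4 (finiteness of the minimax a posteriori error).** -/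
theorem minimax_error_finite_iff_discrete {m n p : ℕ}
    (F C : ℕ → Matrix (Fin m) (Fin n) ℝ)
    (Hm : ℕ → Matrix (Fin p) (Fin n) ℝ)
    (S0 : Matrix (Fin m) (Fin m) ℝ) (hS0 : S0.PosDef)
    (S : ℕ → Matrix (Fin m) (Fin m) ℝ) (hS : ∀ k, (S k).PosDef)
    (R : ℕ → Matrix (Fin p) (Fin p) ℝ) (hR : ∀ k, (R k).PosDef)
    (y : ℕ → EuclideanSpace ℝ (Fin p)) (N : ℕ)
    (hne : (GySeq F C Hm S0 S R y N).Nonempty)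
    (ℓ : EuclideanSpace ℝ (Fin n)) :
    sigmaHatSeq F C Hm S0 S R y N ℓ < ⊤ ↔
      matVec (pinv (Qmat F C Hm S0 S R N) * Qmat F C Hm S0 S R N) ℓ = ℓ := by
  obtain ⟨hQ, hle, hex⟩ := Qmat_spec (F := F) (C := C) (Hm := Hm) hS0 hS hR N
  have hQ0 : ∀ v, 0 ≤ ⟪matVec (Qmat F C Hm S0 S R N) v, v⟫ := by
    intro v
    obtain ⟨x, -, hx⟩ := hex v
    exact hx ▸ cost_nonneg hS0 hS hR N x
  obtain ⟨xs, hxs⟩ := hne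
  have hxs' : cost F C Hm S0 S R y N xs ≤ 1 := hxs
  set Q := Qmat F C Hm S0 S R N
  obtain ⟨h1, -, -, h4⟩ := pinv_spec hQ
  set B := pinv Q
  constructor
  -- Finiteness makes `ℓ` orthogonal to `ker Q`, hence to `ℓ - Q⁺Qℓ`, which is then zero.
  · intro hfin
    obtain ⟨a, ha⟩ := iInf_lt_iff.mp hfin
    obtain ⟨M, hM⟩ : ∃ M : ℝ, ∀ x ∈ GySeq F C Hm S0 S R y N, |⟪ℓ, x N⟫ - a| ≤ M := by
      refine ⟨_, fun x hx => (ENNReal.ofReal_le_iff_le_toReal ha.ne).mp ?_⟩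
      exact le_iSup₂ (f := fun x (_ : x ∈ GySeq F C Hm S0 S R y N) =>
        ENNReal.ofReal |⟪ℓ, x N⟫ - a|) x hx
    have horth : ∀ v, matVec Q v = 0 → ⟪ℓ, v⟫ = 0 := by
      intro v hv
      obtain ⟨d, hdN, hd⟩ := hex v
      rw [hv, inner_zero_left] at hd
      by_contra hne
      -- This multiple of `d` is chosen so that `(ℓ, x_N) - a = M + 1`.
      have h := hM (xs + ((M + 1 + a - ⟪ℓ, xs N⟫) / ⟪ℓ, v⟫) • d)
        ((cost_add_smul hS0 hS hR N xs d hd _).trans_le hxs')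
      rw [Pi.add_apply, Pi.smul_apply, hdN, inner_add_right, inner_smul_right,
        div_mul_cancel₀ _ hne] at h
      have := (le_abs_self _).trans h
      linarith
    have hw : matVec Q (ℓ - matVec (B * Q) ℓ) = 0 := by
      rw [matVec_sub, ← matVec_mul, ← Matrix.mul_assoc, h1, sub_self]
    have h5 : ⟪ℓ - matVec (B * Q) ℓ, ℓ - matVec (B * Q) ℓ⟫ = 0 := by
      rw [inner_sub_left, horth _ hw, inner_matVec_left, h4, matVec_mul, hw, matVec_zero,
        inner_zero_right, sub_zero]
    exact (sub_eq_zero.mp (inner_self_eq_zero.mp h5)).symm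
  -- With `ℓ = Q z`, the deviation `(ℓ, d_N) = (Q z, d_N)` is bounded because `(Q d_N, d_N) ≤ 4`.
  · intro hl
    obtain ⟨z, hz⟩ : ∃ z, ℓ = matVec Q z := by
      refine ⟨matVec Bᵀ ℓ, ?_⟩
      rw [← matVec_mul]
      nth_rewrite 1 [← hl]
      rw [← h4, transpose_mul, hQ]
    refine iInf_lt_iff.mpr ⟨⟪ℓ, xs N⟫, lt_of_le_of_lt ?_
      (ENNReal.ofReal_lt_top (r := (⟪matVec Q z, z⟫ + 4) / 2))⟩
    refine iSup₂_le fun x hx => ENNReal.ofReal_le_ofReal ?_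
    have hx' : cost F C Hm S0 S R y N x ≤ 1 := hx
    have h6 := cost_sub_le (F := F) (C := C) (Hm := Hm) (y := y) hS0 hS hR N x xs
    have h7 := hle (x - xs)
    have h8 := two_mul_abs_inner_le hQ hQ0 z ((x - xs) N)
    rw [← hz, Pi.sub_apply, inner_sub_right, ← Pi.sub_apply] at h8
    rw [← hz] at *
    linarith
end
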